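/- For every n ≥ 5, the general linear group GL_n(ℤ) and the special linear group SL_n(ℤ) are finitely generated and self-simulable. -/

import Mathlib

open scoped Pointwise

namespace SelfSim

/-- The left shift action of a group `G` on the full shift `G → A`:
`(g · x)(h) = x (g⁻¹ h)`. -/
def shift {G A : Type*} [Group G] (g : G) (x : G → A) : G → A := fun h => x (g⁻¹ * h)

/-- A `G`-subshift: a closed, shift-invariant subset of the full shift `G → A`
(`A` carrying its topology, `G → A` the product topology). -/
def IsSubshift {G A : Type*} [Group G] [TopologicalSpace A] (X : Set (G → A)) : Prop :=
  IsClosed X ∧ ∀ (g : G) (x : G → A), x ∈ X → shift g x ∈ X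

/-- A subshift of finite type: there are a finite set `F ⊆ G` and a set `𝓛` of patterns
on `F` such that `x ∈ X` iff every translate of `x` restricted to `F` lies in `𝓛`. -/
def IsSFT {G A : Type*} [Group G] (X : Set (G → A)) : Prop :=
  ∃ (F : Finset G) (L : Set (↥F → A)),
    ∀ x : G → A, x ∈ X ↔ ∀ g : G, (fun h : ↥F => x (g * (h : G))) ∈ L

/-- `φ` is a topological factor map from the shift action on `Z ⊆ G → A` onto the
action `act` of `G` on `Y ⊆ β`: continuous on `Z`, mapping `Z` into and onto `Y`,
and equivariant. -/
def IsFactorMapOnto {G A β : Type*} [Group G] [TopologicalSpace A] [TopologicalSpace β]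
    (Z : Set (G → A)) (φ : (G → A) → β) (act : G → β → β) (Y : Set β) : Prop :=
  ContinuousOn φ Z ∧ Set.MapsTo φ Z Y ∧ Set.SurjOn φ Z Y ∧
    ∀ (g : G) (x : G → A), x ∈ Z → φ (shift g x) = act g (φ x)

/-- A sofic subshift: a topological factor of some subshift of finite type
(over some finite alphabet, which we may take to be `Fin k`). -/
def IsSofic {G A : Type*} [Group G] [TopologicalSpace A] (Y : Set (G → A)) : Prop :=
  ∃ (k : ℕ) (Z : Set (G → Fin k)) (φ : (G → Fin k) → (G → A)),
    IsSFT Z ∧ IsFactorMapOnto Z φ shift Y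

/-- Recursively enumerable predicate. -/
def RE {α : Type*} [Primcodable α] (p : α → Prop) : Prop :=
  Partrec fun a => Part.assert (p a) fun _ => Part.some ()

/-- `x : ℕ → A` begins with the finite word `w`. -/
def ExtendsWord {A : Type*} (x : ℕ → A) (w : List A) : Prop :=
  ∀ i : Fin w.length, x i = w.get i

/-- A closed subset `Z ⊆ A^ℕ` is effectively closed if the set of words whose
cylinder is disjoint from `Z` is recursively enumerable. -/
def EffectivelyClosedSet {A : Type*} [Primcodable A] [TopologicalSpace A]
    (Z : Set (ℕ → A)) : Prop :=
  IsClosed Z ∧ RE fun w : List A => ∀ x : ℕ → A, ExtendsWord x w → x ∉ Z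

/-- `act` defines an action of `G` on the set `X ⊆ β`. -/
def IsActionOn {G β : Type*} [Group G] (act : G → β → β) (X : Set β) : Prop :=
  (∀ g : G, Set.MapsTo (act g) X X) ∧ (∀ x ∈ X, act 1 x = x) ∧
    ∀ (g h : G) (x : β), x ∈ X → act (g * h) x = act g (act h x)

/-- The set representation of the action `act` of `G` on `X ⊆ A^ℕ` with respect to the
finite generating tuple `s : Fin m → G` (playing the role of the generating set `S`):
the set of `y ∈ (A^S)^ℕ` of the form `y(n)(s) = (s · x)(n)` for some `x ∈ X`. -/
def SetRep {G A : Type*} [Group G] {m : ℕ} (s : Fin m → G)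
    (act : G → (ℕ → A) → ℕ → A) (X : Set (ℕ → A)) : Set (ℕ → (Fin m → A)) :=
  {y | ∃ x ∈ X, ∀ i : Fin m, (fun n => y n i) = act (s i) x}

/-- The action `act` of `G` on the closed set `X ⊆ A^ℕ` is effectively closed with respect
to the finite generating tuple `s` (which contains `1` and generates `G` as a monoid):
its set representation is an effectively closed subset of `(A^S)^ℕ`. -/
def IsEffClosedActionWith {G A : Type*} [Group G] [Primcodable A] [TopologicalSpace A]
    {m : ℕ} (s : Fin m → G) (act : G → (ℕ → A) → ℕ → A) (X : Set (ℕ → A)) : Prop :=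
  IsClosed X ∧ IsActionOn act X ∧ (∃ i, s i = 1) ∧
    Submonoid.closure (Set.range s) = ⊤ ∧
    EffectivelyClosedSet (SetRep s act X)

/-- The action `act` of `G` on `X ⊆ A^ℕ` is effectively closed (with respect to some
finite generating set containing `1`). -/
def IsEffClosedAction {G A : Type*} [Group G] [Primcodable A] [TopologicalSpace A]
    (act : G → (ℕ → A) → ℕ → A) (X : Set (ℕ → A)) : Prop :=
  ∃ (m : ℕ) (s : Fin m → G), IsEffClosedActionWith s act X

/-- The action `act` of `G` on `X ⊆ A^ℕ` is a topological factor of some `G`-subshift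
of finite type. -/
def IsFactorOfSFT {G A : Type*} [Group G] [TopologicalSpace A]
    (act : G → (ℕ → A) → ℕ → A) (X : Set (ℕ → A)) : Prop :=
  ∃ (k : ℕ) (Z : Set (G → Fin k)) (φ : (G → Fin k) → (ℕ → A)),
    IsSFT Z ∧ IsFactorMapOnto Z φ act X

/-- A group `G` is (dynamically) self-simulable if every effectively closed action of `G`
on a closed subset of `{0,1}^ℕ` is a topological factor of a `G`-subshift of finite type. -/
def SelfSimulable (G : Type*) [Group G] : Prop :=
  ∀ (X : Set (ℕ → Bool)) (act : G → (ℕ → Bool) → ℕ → Bool),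
    IsEffClosedAction act X → IsFactorOfSFT act X

/-- Amenability via the Følner condition: for every finite `K` and `δ > 0` there is a
nonempty finite `F` with `|KF △ F| ≤ δ |F|`. -/
def Amenable (G : Type*) [Group G] : Prop :=
  ∀ K : Set G, K.Finite → ∀ δ : ℝ, 0 < δ →
    ∃ F : Set G, F.Finite ∧ F.Nonempty ∧
      ((symmDiff (K * F) F).ncard : ℝ) ≤ δ * F.ncard

/-- A finitely generated group is recursively presented: for some finite tuple generating
`G` as a monoid, the set of words evaluating to the identity is recursively enumerable. -/
def RecursivelyPresented (G : Type*) [Group G] : Prop :=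
  ∃ (m : ℕ) (s : Fin m → G), Submonoid.closure (Set.range s) = ⊤ ∧
    RE fun w : List (Fin m) => (w.map s).prod = 1

/-- A finitely generated group has decidable word problem: for some finite tuple generating
`G` as a monoid, the set of words evaluating to the identity is decidable. -/
def DecidableWordProblem (G : Type*) [Group G] : Prop :=
  ∃ (m : ℕ) (s : Fin m → G), Submonoid.closure (Set.range s) = ⊤ ∧
    ComputablePred fun w : List (Fin m) => (w.map s).prod = 1

/-- A pattern coding `c` (a finite list of pairs (word over the generators, letter))
holds in the configuration `x` at position `g`: `x (g ⬝ w̲) = a` for every pair `(w, a)`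
of `c`. This says exactly that `x ∈ g·[c]`. -/
def PCHolds {G A : Type*} [Group G] {m : ℕ} (s : Fin m → G) (x : G → A) (g : G)
    (c : List (List (Fin m) × A)) : Prop :=
  ∀ p ∈ c, x (g * (p.1.map s).prod) = p.2

/-- A `G`-subshift `X ⊆ A^G` is effectively closed by patterns: for some finite generating
tuple `s`, there is a recursively enumerable set `𝒞` of pattern codings such that `X` is the
set of configurations avoiding every translate of every cylinder `[c]`, `c ∈ 𝒞`. -/
def EffClosedByPatterns {G A : Type*} [Group G] [Primcodable A] (X : Set (G → A)) : Prop :=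
  ∃ (m : ℕ) (s : Fin m → G), Submonoid.closure (Set.range s) = ⊤ ∧
    ∃ 𝒞 : Set (List (List (Fin m) × A)), RE (· ∈ 𝒞) ∧
      X = {x : G → A | ∀ (g : G) (c : List (List (Fin m) × A)), c ∈ 𝒞 → ¬ PCHolds s x g c}

/-- Word metric distance associated to a finite tuple `s` generating `G` as a monoid. -/
noncomputable def wordDist {G : Type*} [Group G] {m : ℕ} (s : Fin m → G) (g h : G) : ℕ :=
  sInf {n : ℕ | ∃ w : List (Fin m), w.length = n ∧ (w.map s).prod = g⁻¹ * h}

/-- Two finitely generated groups are quasi-isometric (with respect to word metrics given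
by some finite generating sets). -/
def QuasiIsometric (G₁ G₂ : Type*) [Group G₁] [Group G₂] : Prop :=
  ∃ (m₁ : ℕ) (s₁ : Fin m₁ → G₁) (m₂ : ℕ) (s₂ : Fin m₂ → G₂),
    Submonoid.closure (Set.range s₁) = ⊤ ∧ Submonoid.closure (Set.range s₂) = ⊤ ∧
    ∃ (f : G₂ → G₁) (A B C : ℝ), 1 ≤ A ∧ 0 ≤ B ∧ 0 ≤ C ∧
      (∀ x y : G₂,
        (1 / A) * (wordDist s₂ x y : ℝ) - B ≤ (wordDist s₁ (f x) (f y) : ℝ) ∧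
        (wordDist s₁ (f x) (f y) : ℝ) ≤ A * (wordDist s₂ x y : ℝ) + B) ∧
      ∀ z : G₁, ∃ x : G₂, (wordDist s₁ z (f x) : ℝ) ≤ C

/-- A finitely presented group: a quotient of a finitely generated free group by the
normal closure of finitely many relators. -/
def FinitelyPresentedGroup (G : Type*) [Group G] : Prop :=
  ∃ (m : ℕ) (f : FreeGroup (Fin m) →* G) (R : Finset (FreeGroup (Fin m))),
    Function.Surjective f ∧ f.ker = Subgroup.normalClosure (R : Set (FreeGroup (Fin m)))

/-- A subgroup `Δ ≤ G` is mediated: there is a finite generating set `T` of `G` such that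
`Δ ∩ tΔt⁻¹` is non-amenable for every `t ∈ T`. -/
def Mediated {G : Type*} [Group G] (Δ : Subgroup G) : Prop :=
  ∃ T : Finset G, Subgroup.closure (T : Set G) = ⊤ ∧
    ∀ t ∈ T, ¬ Amenable ↥(Δ ⊓ Subgroup.map (MulAut.conj t).toMonoidHom Δ)

end SelfSim

/-!
Call a rule for walking in a group `G` a *walker*: every `g` has two moves, each of them a right
multiplication by one of finitely many elements, chosen according to a sign carried by `g`. If the
two moves are injective with disjoint images, then one move of the first kind followed by moves of
the second kind attaches to each `g` its own infinite ray, and the rays are pairwise disjoint. Two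
walkers which commute attach to each `g` its own quadrant `ℕ × ℕ`, in which local rules can run a
Turing machine that checks whether a sequence written along the sides belongs to a given
effectively closed set. Since both sides carry the same sequence, chains of commuting walkers make
all rays of `g` carry the same sequence `ξ g`. A walker whose moves commute with `t` relates
`ξ (g * t)` to `ξ g` by a local rule; when such `t` generate `G`, local rules therefore let `ξ g`
encode `g⁻¹ • x` for a point `x` of the given action.

In a group of integer matrices containing `SL`, each pair of indices gives a walker which adds to
one of the two columns `±` the other one, the sign being chosen so that the column becomes the
longer of the two. Disjoint pairs give commuting walkers, and a transvection commutes with the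
walkers of all pairs disjoint from its indices. For `n ≥ 5` any two pairs which meet are disjoint
from a common third one, and `SL` is generated by transvections by Euclid's algorithm.
-/

namespace SelfSim

open Function Relation Turing

universe u

/-! ### Turing machines reading an infinite word -/

section Words

variable {A : Type*}

/-- The word formed by the first `k` letters of `x`. -/
def prefixWord (x : ℕ → A) (k : ℕ) : List A := (List.range k).map x

@[simp] theorem length_prefixWord (x : ℕ → A) (k : ℕ) : (prefixWord x k).length = k := by
  simp [prefixWord]

theorem prefixWord_succ (x : ℕ → A) (k : ℕ) : prefixWord x (k + 1) = prefixWord x k ++ [x k] := by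
  simp [prefixWord, List.range_succ]

theorem prefixWord_succ' (x : ℕ → A) (k : ℕ) :
    prefixWord x (k + 1) = x 0 :: prefixWord (fun i => x (i + 1)) k := by
  simp [prefixWord, List.range_succ_eq_map, comp_def]

/-- The sequence `a, u 0, u 1, …`. -/
def scons (a : A) (u : ℕ → A) : ℕ → A
  | 0 => a
  | i + 1 => u i

end Words

/-- The indicator of the first `t` natural numbers. -/
def below (t i : ℕ) : Bool := decide (i < t)

theorem scons_true_below (t : ℕ) : scons true (below t) = below (t + 1) := by
  funext i
  cases i <;> simp [scons, below]

/-- The letters of a machine's input: two start markers and the binary digits. -/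
inductive InputSym
  | fst
  | snd
  | bit (b : Bool)
deriving DecidableEq, Fintype

/-- A configuration of a machine whose tape is cut at the head: `L` lists the symbols to the left
of the head, nearest first, and `R` those from the head on. -/
@[ext] structure Conf (Q Γ : Type) where
  q : Q
  L : ℕ → Γ
  R : ℕ → Γ

namespace Conf

variable {Q Λ Γ : Type}

/-- The result of executing a statement. -/
def app (c : Conf Q Γ) : Q × TM0.Stmt Γ → Conf Q Γ
  | (q, .move .left) => ⟨q, fun i => c.L (i + 1), scons (c.L 0) c.R⟩
  | (q, .move .right) => ⟨q, scons (c.R 0) c.L, fun i => c.R (i + 1)⟩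
  | (q, .write a) => ⟨q, c.L, scons a fun i => c.R (i + 1)⟩

/-- Renaming of the states. -/
def mapState (f : Q → Λ) (c : Conf Q Γ) : Conf Λ Γ := ⟨f c.q, c.L, c.R⟩

theorem mapState_app (f : Q → Λ) (c : Conf Q Γ) (q : Q) (s : TM0.Stmt Γ) :
    (c.app (q, s)).mapState f = (c.mapState f).app (f q, s) := by
  rcases s with (_ | _) | _ <;> rfl

/-- The configuration of Mathlib's machine model cut at the head. -/
def ofCfg [Inhabited Γ] (c : TM0.Cfg Γ Λ) : Conf Λ Γ :=
  ⟨c.q, c.Tape.left.nth, scons c.Tape.head c.Tape.right.nth⟩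

theorem ofCfg_move [Inhabited Γ] (q q' : Λ) (T : Tape Γ) (d : Dir) :
    ofCfg ⟨q', T.move d⟩ = (ofCfg ⟨q, T⟩).app (q', .move d) := by
  cases d <;> ext i <;> try rfl
  all_goals rcases i with _ | _ | i <;> simp [ofCfg, app, scons, Tape.move]

theorem ofCfg_write [Inhabited Γ] (q q' : Λ) (T : Tape Γ) (a : Γ) :
    ofCfg ⟨q', T.write a⟩ = (ofCfg ⟨q, T⟩).app (q', .write a) := rfl

end Conf

/-- A Turing machine with finitely many states and tape symbols, together with an encoding of
input letters as tape symbols. -/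
structure Machine where
  Q : Type
  Γ : Type
  [finQ : Finite Q]
  [finΓ : Finite Γ]
  start : Q
  blank : Γ
  enc : InputSym → Γ
  δ : Q → Γ → Option (Q × TM0.Stmt Γ)

attribute [instance] Machine.finQ Machine.finΓ

namespace Machine

variable (M : Machine)

/-- One step of computation; `none` means that the machine halts. -/
def step (c : Conf M.Q M.Γ) : Option (Conf M.Q M.Γ) := (M.δ c.q (c.R 0)).map c.app

/-- The initial configuration on the letters of `ℓ` at the positions marked by `p`. -/
def init (ℓ : ℕ → InputSym) (p : ℕ → Bool) : Conf M.Q M.Γ :=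
  ⟨M.start, fun _ => M.blank, fun i => if p i then M.enc (ℓ i) else M.blank⟩

/-- The computation starting from `c` is finite. -/
def Halts (c : Conf M.Q M.Γ) : Prop := (StateTransition.eval M.step c).Dom

variable {M}

theorem halts_of_reaches {c c' : Conf M.Q M.Γ} (h : StateTransition.Reaches M.step c c')
    (hc' : M.step c' = none) : M.Halts c :=
  Part.dom_iff_mem.2 ⟨c', StateTransition.mem_eval.2 ⟨h, hc'⟩⟩

theorem not_halts_of_seq {c : ℕ → Conf M.Q M.Γ} (hc : ∀ n, M.step (c n) = some (c (n + 1))) :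
    ¬ M.Halts (c 0) := by
  intro h
  obtain ⟨b, hb⟩ := Part.dom_iff_mem.1 h
  exact StateTransition.evalInduction (C := fun a => ∀ n, c n ≠ a) hb
    (fun a _ ih n hn => ih (c (n + 1)) (hn ▸ hc n) (n + 1) rfl) 0 rfl

end Machine

section OfTM0

variable {Γ Λ : Type} [Inhabited Γ] [Finite Γ] [Inhabited Λ]

/-- A machine of Mathlib's model, restricted to a finite set of states closed under its
transitions. -/
def Machine.ofTM0 (M : TM0.Machine Γ Λ) (S : Finset Λ) (hS : TM0.Supports M (S : Set Λ))
    (enc : InputSym → Γ) : Machine where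
  Q := S
  Γ := Γ
  start := ⟨default, hS.1⟩
  blank := default
  enc := enc
  δ q a := (M q a).pmap (fun s hs => (⟨s.1, hs⟩, s.2)) fun _ hs => hS.2 hs q.2

variable {M : TM0.Machine Γ Λ} {S : Finset Λ} (hS : TM0.Supports M (S : Set Λ))
  (enc : InputSym → Γ)

theorem Machine.ofTM0_respects :
    StateTransition.Respects (TM0.step M) (Machine.ofTM0 M S hS enc).step
      fun c d => Conf.ofCfg c = d.mapState Subtype.val := by
  rintro ⟨q, T⟩ d h
  have hq : q = d.q.1 := congrArg Conf.q h
  have hhead : T.head = d.R 0 := congrArg (Conf.R · 0) h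
  subst hq
  rcases hM : M d.q.1 T.head with _ | ⟨q₁, s⟩
  · simp [TM0.step, Machine.step, Machine.ofTM0, ← hhead, hM]
  · have hstep : (Machine.ofTM0 M S hS enc).step d = some (d.app (⟨q₁, hS.2 hM d.q.2⟩, s)) := by
      simp [Machine.step, Machine.ofTM0, ← hhead, hM]
    have happ (s' : TM0.Stmt Γ) : (Conf.ofCfg ⟨d.q.1, T⟩).app (q₁, s') =
        (d.app (⟨q₁, hS.2 hM d.q.2⟩, s')).mapState Subtype.val :=
      (congrArg (·.app (q₁, s')) h).trans (Conf.mapState_app Subtype.val d ⟨q₁, _⟩ s').symm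
    cases s with
    | move dir =>
      simp only [TM0.step, hM, Option.map_some]
      exact ⟨_, (Conf.ofCfg_move d.q.1 q₁ T dir).trans (happ _), .single hstep⟩
    | write a =>
      simp only [TM0.step, hM, Option.map_some]
      exact ⟨_, (Conf.ofCfg_write d.q.1 q₁ T a).trans (happ _), .single hstep⟩

theorem Machine.ofTM0_halts_iff (ℓ : ℕ → InputSym) (t : ℕ) :
    (Machine.ofTM0 M S hS enc).Halts ((Machine.ofTM0 M S hS enc).init ℓ (below t)) ↔
      (TM0.eval M (prefixWord (fun i => enc (ℓ i)) t)).Dom := by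
  refine (StateTransition.tr_eval_dom (Machine.ofTM0_respects hS enc)
    (a₁ := TM0.init (prefixWord (fun i => enc (ℓ i)) t)) ?_).trans (by simp [TM0.eval])
  have hnth : ∀ (l : List Γ) (i : ℕ), scons l.headI (ListBlank.mk l.tail).nth i = l.getI i := by
    rintro (_ | ⟨a, l⟩) (_ | i) <;> simp [scons]
  ext i
  · rfl
  · simp [Conf.ofCfg, TM0.init, Tape.mk₁, Tape.mk₂, Tape.mk', Conf.mapState, Machine.init,
      Machine.ofTM0]
  · refine (hnth _ i).trans ?_
    rw [List.getI_eq_getElem?_getD]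
    by_cases h : i < t <;> simp [Conf.mapState, Machine.init, Machine.ofTM0, prefixWord, below, h]

end OfTM0

/-- The number with binary expansion `1u`. -/
def binNum (u : List Bool) : ℕ := u.foldl (fun n b => Nat.bit b n) 1

theorem binNum_append_singleton (u : List Bool) (b : Bool) :
    binNum (u ++ [b]) = Nat.bit b (binNum u) := by
  simp [binNum]

theorem binNum_pos (u : List Bool) : 0 < binNum u := by
  induction u using List.reverseRecOn with
  | nil => simp [binNum]
  | append_singleton u b ih =>
    rw [binNum_append_singleton, Nat.bit_val]
    omega

/-- The input presenting the digits of `f` after the two start markers. -/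
def inputTape (f : ℕ → Bool) : ℕ → InputSym := scons .fst (scons .snd fun i => .bit (f i))

section OfCode

open PartrecToTM2 ToPartrec

/-- The binary digits of the stack machine. -/
def digit (b : Bool) : Γ' := cond b .bit1 .bit0

theorem trNat_bit (b : Bool) {n : ℕ} (hn : 0 < n) :
    trNat (Nat.bit b n) = digit b :: trNat n := by
  rw [← Num.to_of_nat n] at hn
  obtain ⟨p, hp⟩ : ∃ p, (n : Num) = .pos p := by
    rcases h : (n : Num) with _ | p
    · simp [h] at hn
    · exact ⟨p, rfl⟩
  have hbit : ((Nat.bit b n : ℕ) : Num) = bif b then (n : Num).bit1 else (n : Num).bit0 := by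
    cases b <;> simp [← Num.bit0_of_bit0, ← Num.bit1_of_bit1, two_mul]
  rw [trNat, trNat, hbit, hp]
  cases b <;> rfl

theorem trNat_binNum (u : List Bool) :
    trNat (binNum u) = (u.map digit).reverse ++ [.bit1] := by
  induction u using List.reverseRecOn with
  | nil => rfl
  | append_singleton u b ih =>
    rw [binNum_append_singleton, trNat_bit b (binNum_pos u), ih]
    simp

theorem exists_code_dom_iff {p : ℕ → Prop} (hp : REPred p) :
    ∃ c : Code, ∀ n, (c.eval [n]).Dom ↔ p n := by
  have hf : Partrec fun n => (Part.assert (p n) fun _ => Part.some ()).map fun _ => 0 :=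
    Partrec.map hp (Computable.const 0).to₂
  obtain ⟨c, hc⟩ := Code.exists_code (Nat.Partrec'.part_iff₁.2 hf)
  refine ⟨c, fun n => ?_⟩
  have hcn : c.eval [n] = _ := hc ⟨[n], rfl⟩
  rw [hcn]
  exact exists_prop.trans (and_iff_left trivial)

variable (c : Code)

/-- The stack machine evaluating `c` starts by running `c`. -/
@[reducible] def inhabitedΛ' : Inhabited Λ' := ⟨trNormal c .halt⟩

/-- The universal stack machine `PartrecToTM2.tr`, with its type spelled out. -/
def stackMachine : Λ' → TM2.Stmt (fun _ : K' => Γ') Λ' (Option Γ') := tr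

theorem tm2_eval_dom_iff (v : List ℕ) :
    letI := inhabitedΛ' c
    (TM2.eval stackMachine K'.main (trList v)).Dom ↔ (c.eval v).Dom := by
  let _ := inhabitedΛ' c
  have hinit : (TM2.init K'.main (trList v) : TM2.Cfg (fun _ => Γ') Λ' (Option Γ')) =
      init c v := by
    simp only [TM2.init, init]
    congr 1
    funext k
    cases k <;> rfl
  have heval : StateTransition.eval (TM2.step stackMachine) (init c v) = halt <$> c.eval v :=
    tr_eval c v
  rw [TM2.eval, hinit, heval]
  exact Iff.rfl

/-- The symbol of the multi-track tape of the one-tape simulation which holds `a` on the main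
track; the Boolean marks the bottom of the stacks. -/
def trackSym (bottom : Bool) (a : Γ') : TM2to1.Γ' K' fun _ => Γ' :=
  (bottom, update (fun _ => none) K'.main (some a))

/-- The tape symbols which present the list `[binNum u]` to the one-tape simulation: the bottom of
the stack, the leading digit `1`, and the digits of `u`. -/
def trackEnc : InputSym → TM2to1.Γ' K' fun _ => Γ'
  | .fst => trackSym true .cons
  | .snd => trackSym false .bit1
  | .bit b => trackSym false (digit b)

theorem trInit_binNum (f : ℕ → Bool) (k : ℕ) :
    TM2to1.trInit K'.main (trList [binNum (prefixWord f k)]) =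
      prefixWord (fun i => trackEnc (inputTape f i)) (k + 2) := by
  simp only [TM2to1.trInit, trList, trNat_binNum, prefixWord_succ', inputTape, scons,
    List.reverse_append, List.reverse_reverse, List.reverse_cons, List.reverse_nil,
    List.nil_append, List.cons_append]
  refine congrArg (List.cons _) (congrArg (List.cons _) ?_)
  exact (List.map_map ..).trans ((List.map_map ..).trans (List.map_congr_left fun _ _ => rfl))

theorem exists_machine {p : ℕ → Prop} (hp : REPred p) :
    ∃ M : Machine, ∀ (f : ℕ → Bool) (k : ℕ),
      M.Halts (M.init (inputTape f) (below (k + 2))) ↔ p (binNum (prefixWord f k)) := by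
  classical
  obtain ⟨c, hc⟩ := exists_code_dom_iff hp
  let _ := inhabitedΛ' c
  have hstack : TM2.Supports stackMachine (codeSupp c .halt) := tr_supports c .halt
  have hsup := TM1to0.tr_supports _ (TM2to1.tr_supports _ hstack)
  have : Finite K' :=
    .of_surjective ![K'.main, .rev, .aux, .stack] fun k => by cases k <;> decide
  have : Finite (TM2to1.Γ' K' fun _ => Γ') :=
    inferInstanceAs (Finite (Bool × (∀ _ : K', Option Γ')))
  refine ⟨.ofTM0 _ _ hsup trackEnc, fun f k => ?_⟩
  rw [Machine.ofTM0_halts_iff, ← trInit_binNum, TM1to0.tr_eval, TM2to1.tr_eval_dom,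
    tm2_eval_dom_iff, hc]

end OfCode

/-! ### Decidable tests for effectively closed sets -/

theorem binNum_injective : Injective binNum := by
  intro u v h
  induction u using List.reverseRecOn generalizing v with
  | nil =>
    rcases List.eq_nil_or_concat' v with rfl | ⟨v, b, rfl⟩
    · rfl
    · have := binNum_pos v
      simp only [binNum_append_singleton, Nat.bit_val] at h
      simp only [binNum, List.foldl_nil] at h this
      omega
  | append_singleton u a ih =>
    rcases List.eq_nil_or_concat' v with rfl | ⟨v, b, rfl⟩
    · have := binNum_pos u
      simp only [binNum_append_singleton, Nat.bit_val] at h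
      simp only [binNum, List.foldl_nil] at h this
      omega
    · rw [binNum_append_singleton, binNum_append_singleton] at h
      have hab : a = b := by simpa using congrArg Nat.bodd h
      rw [ih (by simpa using congrArg Nat.div2 h), hab]

theorem lt_binNum_prefixWord (f : ℕ → Bool) (k : ℕ) : k < binNum (prefixWord f k) := by
  induction k with
  | zero => exact binNum_pos _
  | succ k ih =>
    rw [prefixWord_succ, binNum_append_singleton, Nat.bit_val]
    omega

theorem binNum_prefixWord_add_div (f : ℕ → Bool) (k e : ℕ) :
    binNum (prefixWord f (k + e)) / 2 ^ e = binNum (prefixWord f k) := by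
  induction e with
  | zero => simp
  | succ e ih =>
    rw [← add_assoc, prefixWord_succ, binNum_append_singleton, pow_succ', ← Nat.div_div_eq_div_mul,
      Nat.bit_div_two, ih]

theorem eq_prefixWord_of_binNum_div_eq {f : ℕ → Bool} {k e : ℕ} {u : List Bool}
    (h : binNum (prefixWord f k) / 2 ^ e = binNum u) : u = prefixWord f u.length := by
  rcases le_total e k with hek | hke
  · obtain ⟨k, rfl⟩ := Nat.exists_eq_add_of_le' hek
    rw [binNum_prefixWord_add_div] at h
    rw [← binNum_injective h, length_prefixWord]
  · obtain ⟨d, rfl⟩ := Nat.exists_eq_add_of_le hke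
    have h0 : binNum (prefixWord f k) / 2 ^ k = 1 := by
      simpa [prefixWord, binNum] using binNum_prefixWord_add_div f 0 k
    rw [pow_add, ← Nat.div_div_eq_div_mul, h0] at h
    have hu := binNum_pos u
    have hd := Nat.div_le_self 1 (2 ^ d)
    rw [binNum_injective (a₁ := u) (a₂ := []) (by simp only [binNum, List.foldl_nil] at *; omega)]
    simp [prefixWord]

section Flat

variable {A : Type*} {m : ℕ}

/-- The concatenation of a sequence of blocks of length `m`. -/
def flat [NeZero m] (y : ℕ → Fin m → A) (n : ℕ) : A := y (n / m) (Fin.ofNat m n)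

/-- The concatenation of a word of blocks of length `m`. -/
def flatWord (w : List (Fin m → A)) : List A := w.flatMap List.ofFn

theorem length_flatWord (w : List (Fin m → A)) : (flatWord w).length = w.length * m := by
  simp [flatWord, List.length_flatMap]

theorem flatWord_injective [NeZero m] : Injective (flatWord : List (Fin m → A) → List A) := by
  intro w w' h
  have hlen : w.length = w'.length := by
    simpa [length_flatWord, NeZero.ne m] using congrArg List.length h
  induction w generalizing w' with
  | nil => exact (List.length_eq_zero_iff.1 hlen.symm).symm
  | cons a w ih =>
    obtain ⟨b, w', rfl⟩ := List.exists_cons_of_length_eq_add_one hlen.symm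
    obtain ⟨hab, hw⟩ := List.append_inj (by simpa only [flatWord, List.flatMap_cons] using h)
      (by simp : (List.ofFn a).length = (List.ofFn b).length)
    rw [List.ofFn_injective hab, ih hw (by simpa using hlen)]

variable [NeZero m]

theorem flatWord_prefixWord (y : ℕ → Fin m → A) (L : ℕ) :
    flatWord (prefixWord y L) = prefixWord (flat y) (L * m) := by
  induction L with
  | zero => simp [flatWord, prefixWord]
  | succ L ih =>
    have hblock : List.ofFn (y L) = (List.range m).map fun i => flat y (L * m + i) := by
      refine List.ext_getElem (by simp) fun i hi _ => ?_
      have him : i < m := by simpa using hi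
      have hdiv : (L * m + i) / m = L := by
        rw [add_comm, Nat.add_mul_div_right _ _ (NeZero.pos m), Nat.div_eq_of_lt him, zero_add]
      have hmod : Fin.ofNat m (L * m + i) = ⟨i, him⟩ := by
        ext
        simp [Nat.mod_eq_of_lt him]
      rw [List.getElem_ofFn, List.getElem_map, List.getElem_range, flat, hdiv, hmod]
    rw [prefixWord_succ, flatWord, List.flatMap_append, List.flatMap_singleton, ← flatWord, ih,
      hblock]
    simp [prefixWord, Nat.succ_mul, List.range_add, comp_def]

theorem flatWord_eq_prefixWord_iff {y : ℕ → Fin m → A} {w : List (Fin m → A)} :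
    flatWord w = prefixWord (flat y) (flatWord w).length ↔ w = prefixWord y w.length := by
  rw [length_flatWord, ← flatWord_prefixWord, flatWord_injective.eq_iff]

end Flat

theorem extendsWord_iff {A : Type*} {x : ℕ → A} {w : List A} :
    ExtendsWord x w ↔ w = prefixWord x w.length := by
  simp [ExtendsWord, prefixWord, List.ext_getElem_iff, Fin.forall_iff, eq_comm]

theorem exists_extendsWord_subset {A : Type*} [TopologicalSpace A] {U : Set (ℕ → A)}
    (hU : IsOpen U) {x : ℕ → A} (hx : x ∈ U) :
    ∃ L, ∀ x', ExtendsWord x' (prefixWord x L) → x' ∈ U := by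
  obtain ⟨I, V, hV, hsub⟩ := isOpen_pi_iff.1 hU x hx
  obtain ⟨L, hL⟩ := I.bddAbove
  refine ⟨L + 1, fun x' hx' => hsub fun i hi => ?_⟩
  have hi' : i < (prefixWord x (L + 1)).length := by
    simpa [Nat.lt_succ_iff] using hL hi
  have : x' i = x i := by simpa [prefixWord] using hx' ⟨i, hi'⟩
  exact this ▸ (hV i hi).2

theorem RE.exists_primrecRel {α : Type*} [Primcodable α] {p : α → Prop} (hp : RE p) :
    ∃ S : ℕ → α → Prop, PrimrecRel S ∧ (∀ a, p a ↔ ∃ n, S n a) ∧ ∀ a, Monotone (S · a) := by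
  obtain ⟨c, hc⟩ := Nat.Partrec.Code.exists_code.1 hp
  refine ⟨fun n a => (Nat.Partrec.Code.evaln n c (Encodable.encode a)).isSome, ?_, fun a => ?_,
    fun a n n' hn => ?_⟩
  · refine Primrec.eq.comp (Primrec.option_isSome.comp (Nat.Partrec.Code.primrec_evaln.comp
      ((Primrec.fst.pair (Primrec.const c)).pair (Primrec.encode.comp Primrec.snd))))
      (Primrec.const true)
  · have heval : (Nat.Partrec.Code.eval c (Encodable.encode a)).Dom ↔ p a := by
      simp [hc, Part.assert]
    rw [← heval, Part.dom_iff_mem]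
    simp only [Nat.Partrec.Code.evaln_complete, Option.isSome_iff_exists]
    exact exists_comm
  · simp only [Option.isSome_iff_exists]
    exact fun ⟨x, hx⟩ => ⟨x, Nat.Partrec.Code.evaln_mono hn hx⟩

theorem primrec_binNum : Primrec binNum := by
  have hbit : Primrec₂ fun (n : ℕ) (b : Bool) => Nat.bit b n :=
    (Primrec.cond Primrec.snd (Primrec.nat_double_succ.comp Primrec.fst)
      (Primrec.nat_double.comp Primrec.fst)).of_eq fun ⟨n, b⟩ => by cases b <;> rfl
  exact Primrec.list_foldl Primrec.id (Primrec.const 1)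
    (hbit.comp (Primrec.fst.comp Primrec.snd) (Primrec.snd.comp Primrec.snd)).to₂

theorem primrec_flatWord {m : ℕ} : Primrec (flatWord : List (Fin m → Bool) → List Bool) :=
  Primrec.list_flatMap Primrec.id ((Primrec.dom_finite _).comp Primrec.snd).to₂

section PrefixTest

variable {α : Type*} [Primcodable α]

/-- Holds of a number `N` with binary expansion `1u` if, for some `a` with `S N a`, the word `u`
starts with `g a`. Both `a` and the length of the remainder of `u` are searched for below `N`. -/
def PrefixTest (S : ℕ → List α → Prop) (g : List α → List Bool) (N : ℕ) : Prop :=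
  ∃ n < N + 1, ∃ e < N + 1,
    S N ((Encodable.decode n).getD []) ∧ N / 2 ^ e = binNum (g ((Encodable.decode n).getD []))

variable {S : ℕ → List α → Prop} {g : List α → List Bool}

theorem computablePred_prefixTest (hS : PrimrecRel S) (hg : Primrec g) :
    ComputablePred (PrefixTest S g) := by
  have hdec : Primrec fun n : ℕ => ((Encodable.decode n).getD [] : List α) :=
    Primrec.option_getD.comp Primrec.decode (Primrec.const [])
  have hpow : Primrec₂ ((· ^ ·) : ℕ → ℕ → ℕ) := Primrec₂.unpaired'.1 Nat.Primrec.pow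
  have hbody : PrimrecRel fun (e : ℕ) (q : ℕ × ℕ) => S q.2 ((Encodable.decode q.1).getD []) ∧
      q.2 / 2 ^ e = binNum (g ((Encodable.decode q.1).getD [])) := by
    refine (hS.comp (Primrec.snd.comp Primrec.snd) (hdec.comp (Primrec.fst.comp Primrec.snd))).and
      (Primrec.eq.comp ?_ ?_)
    · exact Primrec.nat_div.comp (Primrec.snd.comp Primrec.snd)
        (hpow.comp (Primrec.const 2) Primrec.fst)
    · exact primrec_binNum.comp (hg.comp (hdec.comp (Primrec.fst.comp Primrec.snd)))
  have hinner : PrimrecRel fun n N : ℕ => ∃ e < N + 1, S N ((Encodable.decode n).getD []) ∧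
      N / 2 ^ e = binNum (g ((Encodable.decode n).getD [])) :=
    (hbody.exists_mem_list.comp (Primrec.list_range.comp (Primrec.succ.comp Primrec.snd))
      Primrec.id).of_eq (by simp)
  exact (hinner.exists_lt.comp Primrec.succ Primrec.id).computablePred

theorem exists_prefixTest_iff (hS : ∀ a, Monotone (S · a)) (f : ℕ → Bool) :
    (∃ k, PrefixTest S g (binNum (prefixWord f k))) ↔
      ∃ a, (∃ N, S N a) ∧ g a = prefixWord f (g a).length := by
  constructor
  · rintro ⟨k, n, -, e, -, hSn, he⟩
    exact ⟨_, ⟨_, hSn⟩, eq_prefixWord_of_binNum_div_eq he⟩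
  · rintro ⟨a, ⟨N, hN⟩, ha⟩
    let e := N + Encodable.encode a
    have hlt := lt_binNum_prefixWord f ((g a).length + e)
    refine ⟨(g a).length + e, Encodable.encode a, by omega, e, by omega, ?_, ?_⟩
    · rw [Encodable.encodek, Option.getD_some]
      exact hS a (by omega) hN
    · rw [binNum_prefixWord_add_div, Encodable.encodek, Option.getD_some, ← ha]

end PrefixTest

theorem EffectivelyClosedSet.exists_test {m : ℕ} [NeZero m] {Y : Set (ℕ → Fin m → Bool)}
    (hY : EffectivelyClosedSet Y) :
    ∃ P : ℕ → Prop, ComputablePred P ∧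
      ∀ y, y ∈ Y ↔ ∀ k, ¬ P (binNum (prefixWord (flat y) k)) := by
  obtain ⟨S, hS, hSp, hmono⟩ := hY.2.exists_primrecRel
  refine ⟨PrefixTest S flatWord, computablePred_prefixTest hS primrec_flatWord, fun y => ?_⟩
  rw [← not_exists, exists_prefixTest_iff hmono, iff_not_comm]
  simp only [← hSp, flatWord_eq_prefixWord_iff]
  constructor
  · rintro ⟨w, hw, hy⟩
    exact hw y (extendsWord_iff.2 hy)
  · intro hy
    obtain ⟨L, hL⟩ := exists_extendsWord_subset hY.1.isOpen_compl hy
    exact ⟨prefixWord y L, hL, by rw [length_prefixWord]⟩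

/-! ### Space-time diagrams -/

/-- The global state of a computation running the two machines `M true` and `M false` side by side
on the marked positions of an input. -/
@[ext] structure Row (M : Bool → Machine) where
  marked : ℕ → Bool
  conf : ∀ b, Conf (M b).Q (M b).Γ

namespace Row

variable {M : Bool → Machine} {ℓ : ℕ → InputSym}

variable (M) in
/-- Both machines start on the letters of `ℓ` marked by `p`. -/
def initial (ℓ : ℕ → InputSym) (p : ℕ → Bool) : Row M := ⟨p, fun b => (M b).init ℓ p⟩

/-- As long as `M false` runs, both machines have to run; when it halts, both restart with one
more marked position. -/
def Step (ℓ : ℕ → InputSym) (ρ ρ' : Row M) : Prop :=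
  ((M false).step (ρ.conf false) = none ∧ ρ' = initial M ℓ (scons true ρ.marked)) ∨
    ρ'.marked = ρ.marked ∧ ∀ b, (M b).step (ρ.conf b) = some (ρ'.conf b)

theorem exists_restart_or_not_halts {ρ : ℕ → Row M} (hρ : ∀ j, Step ℓ (ρ j) (ρ (j + 1))) {t j : ℕ}
    (hj : ρ j = initial M ℓ (below t)) :
    (M false).Halts ((M false).init ℓ (below t)) ∧ (∃ j', ρ j' = initial M ℓ (below (t + 1))) ∨
      ∀ b, ¬ (M b).Halts ((M b).init ℓ (below t)) := by
  refine or_iff_not_imp_left.2 fun hnot b => ?_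
  have hrun : ∀ n, ((ρ (j + n)).marked = below t ∧ StateTransition.Reaches (M false).step
      ((M false).init ℓ (below t)) ((ρ (j + n)).conf false)) →
      (ρ (j + n + 1)).marked = (ρ (j + n)).marked ∧
        ∀ b, (M b).step ((ρ (j + n)).conf b) = some ((ρ (j + n + 1)).conf b) := by
    rintro n ⟨hmark, hreach⟩
    refine (hρ (j + n)).resolve_left fun ⟨hnone, hrestart⟩ =>
      hnot ⟨Machine.halts_of_reaches hreach hnone, j + n + 1, ?_⟩
    rw [hrestart, hmark, scons_true_below]
  have hinv : ∀ n, (ρ (j + n)).marked = below t ∧ StateTransition.Reaches (M false).step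
      ((M false).init ℓ (below t)) ((ρ (j + n)).conf false) := by
    intro n
    induction n with
    | zero => exact hj ▸ ⟨rfl, .refl⟩
    | succ n ih => exact ⟨(hrun n ih).1.trans ih.1, ih.2.tail ((hrun n ih).2 false)⟩
  have := Machine.not_halts_of_seq (c := fun n => (ρ (j + n)).conf b) fun n => (hrun n (hinv n)).2 b
  simpa [hj, initial] using this

variable {p : ℕ → Prop}

theorem forall_not_of_steps
    (htrue : ∀ k, (M true).Halts ((M true).init ℓ (below (k + 2))) ↔ p k)
    (hfalse : ∀ k, (M false).Halts ((M false).init ℓ (below (k + 2))) ↔ ¬ p k)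
    {ρ : ℕ → Row M} (h0 : ρ 0 = initial M ℓ (below 2)) (hρ : ∀ j, Step ℓ (ρ j) (ρ (j + 1)))
    (k : ℕ) : ¬ p k := by
  have hnext : ∀ k j, ρ j = initial M ℓ (below (k + 2)) →
      ¬ p k ∧ ∃ j', ρ j' = initial M ℓ (below (k + 3)) := by
    intro k j hj
    rcases exists_restart_or_not_halts hρ hj with ⟨hhalt, hj'⟩ | hrun
    · exact ⟨(hfalse k).1 hhalt, hj'⟩
    · exact absurd (fun hp => hrun true ((htrue k).2 hp)) fun hn => hrun false ((hfalse k).2 hn)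
  have hreach : ∀ k, ∃ j, ρ j = initial M ℓ (below (k + 2)) := by
    intro k
    induction k with
    | zero => exact ⟨0, h0⟩
    | succ k ih => exact ih.elim fun j hj => (hnext k j hj).2
  exact (hreach k).elim fun j hj => (hnext k j hj).1

theorem exists_steps (h : ∀ k, ¬ (M true).Halts ((M true).init ℓ (below (k + 2)))) :
    ∃ ρ : ℕ → Row M, ρ 0 = initial M ℓ (below 2) ∧ ∀ j, Step ℓ (ρ j) (ρ (j + 1)) := by
  let Inv (ρ : Row M) : Prop := ∃ k, ρ.marked = below (k + 2) ∧ StateTransition.Reaches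
    (M true).step ((M true).init ℓ (below (k + 2))) (ρ.conf true)
  have hnext : ∀ ρ : Subtype Inv, ∃ ρ' : Subtype Inv, Step ℓ ρ.1 ρ'.1 := by
    rintro ⟨ρ, k, hmark, hreach⟩
    rcases hf : (M false).step (ρ.conf false) with _ | cf
    · refine ⟨⟨initial M ℓ (below (k + 3)), k + 1, rfl, .refl⟩, .inl ⟨hf, ?_⟩⟩
      rw [hmark, scons_true_below]
    · rcases ht : (M true).step (ρ.conf true) with _ | ct
      · exact absurd (Machine.halts_of_reaches hreach ht) (h k)
      · exact ⟨⟨⟨ρ.marked, Bool.rec cf ct⟩, k, hmark, hreach.tail ht⟩,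
          .inr ⟨rfl, Bool.rec hf ht⟩⟩
  choose next hstep using hnext
  let start : Subtype Inv := ⟨initial M ℓ (below 2), 0, rfl, .refl⟩
  refine ⟨fun j => (next^[j] start).1, rfl, fun j => ?_⟩
  beta_reduce
  rw [iterate_succ_apply']
  exact hstep _

end Row

/-- The part of a machine configuration visible at one position: the state and the symbol under
the head are visible everywhere. -/
@[ext] structure MachineCell (M : Machine) where
  q : M.Q
  head : M.Γ
  l : M.Γ
  r : M.Γ

namespace MachineCell

variable {M : Machine}

instance : Finite (MachineCell M) :=
  .of_injective (fun w => (w.q, w.head, w.l, w.r)) fun w w' h => by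
    simp only [Prod.mk.injEq] at h
    exact MachineCell.ext h.1 h.2.1 h.2.2.1 h.2.2.2

/-- The cell shows the initial configuration at a position holding the letter `s`, marked if `p`.
The first letter is assumed to be `InputSym.fst`. -/
def IsInit (s : InputSym) (p : Bool) (w : MachineCell M) : Prop :=
  w.q = M.start ∧ w.head = M.enc .fst ∧ w.l = M.blank ∧ w.r = if p then M.enc s else M.blank

/-- The transition rule at position `0`. -/
def StepLeft (s : M.Q × Turing.TM0.Stmt M.Γ) (w w' : MachineCell M) : Prop :=
  w'.q = s.1 ∧ match s.2 with
    | .move .left => w'.r = w.l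
    | .move .right => w'.l = w.r
    | .write a => w'.r = a

/-- The transition rule at the neighbouring positions `w` and `z`. -/
def StepWindow (s : M.Q × Turing.TM0.Stmt M.Γ) (w z w' z' : MachineCell M) : Prop :=
  match s.2 with
  | .move .left => w'.l = z.l ∧ z'.r = w.r
  | .move .right => z'.l = w.l ∧ w'.r = z.r
  | .write _ => w'.l = w.l ∧ z'.r = z.r

end MachineCell

namespace Conf

variable {M : Machine}

/-- The view of a configuration at position `i`. -/
def cell (c : Conf M.Q M.Γ) (i : ℕ) : MachineCell M := ⟨c.q, c.R 0, c.L i, c.R i⟩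

theorem eq_app_iff {c c' : Conf M.Q M.Γ} {s : M.Q × Turing.TM0.Stmt M.Γ} :
    c' = c.app s ↔ (c.cell 0).StepLeft s (c'.cell 0) ∧
      ∀ i, (c.cell i).StepWindow s (c.cell (i + 1)) (c'.cell i) (c'.cell (i + 1)) := by
  rcases s with ⟨q, (_ | _) | a⟩
  all_goals
    refine ⟨fun h => h ▸ ⟨⟨rfl, rfl⟩, fun _ => ⟨rfl, rfl⟩⟩, fun ⟨⟨hq, h0⟩, h⟩ => Conf.ext hq ?_ ?_⟩
  · exact funext fun i => (h i).1
  · exact funext fun i => by cases i with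
      | zero => exact h0
      | succ i => exact (h i).2
  · exact funext fun i => by cases i with
      | zero => exact h0
      | succ i => exact (h i).1
  · exact funext fun i => (h i).2
  · exact funext fun i => (h i).1
  · exact funext fun i => by cases i with
      | zero => exact h0
      | succ i => exact (h i).2

theorem eq_init_iff {c : Conf M.Q M.Γ} {ℓ : ℕ → InputSym} {p : ℕ → Bool} (hℓ : ℓ 0 = .fst)
    (hp : p 0 = true) : c = M.init ℓ p ↔ ∀ i, (c.cell i).IsInit (ℓ i) (p i) := by
  constructor
  · rintro rfl i
    exact ⟨rfl, by simp [cell, Machine.init, hℓ, hp], rfl, rfl⟩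
  · exact fun h => Conf.ext (h 0).1 (funext fun i => (h i).2.2.1) (funext fun i => (h i).2.2.2)

end Conf

/-- The part of a row visible at one position. -/
@[ext] structure RowCell (M : Bool → Machine) where
  marked : Bool
  mc : ∀ b, MachineCell (M b)

namespace RowCell

variable {M : Bool → Machine}

instance : Finite (RowCell M) :=
  .of_injective (fun w => (w.marked, w.mc)) fun w w' h => by
    simp only [Prod.mk.injEq] at h
    exact RowCell.ext h.1 h.2

/-- The cell shows an initial row at a position holding the letter `s`. -/
def IsInit (s : InputSym) (w : RowCell M) : Prop := ∀ b, (w.mc b).IsInit s w.marked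

/-- The global state seen by `w` ends with the halting of `M false`. -/
def Restarts (w : RowCell M) : Prop := (M false).δ (w.mc false).q (w.mc false).head = none

/-- The transition of `M b` prescribed by `w` is `s`. -/
def Executes (w : RowCell M) (b : Bool) (s : (M b).Q × Turing.TM0.Stmt (M b).Γ) : Prop :=
  (M b).δ (w.mc b).q (w.mc b).head = some s

/-- The consistency rule within a row at position `0`. -/
def CoherentLeft (w : RowCell M) : Prop := ∀ b, (w.mc b).r = (w.mc b).head

/-- The consistency rule within a row at neighbouring positions. -/
def Coherent (w z : RowCell M) : Prop :=
  ∀ b, (z.mc b).q = (w.mc b).q ∧ (z.mc b).head = (w.mc b).head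

/-- The transition rule between consecutive rows at position `0`. -/
def StepLeft (w w' : RowCell M) : Prop :=
  (w.Restarts ∧ w'.marked = true ∧ w'.IsInit .fst) ∨
    w'.marked = w.marked ∧ ∀ b, ∃ s, w.Executes b s ∧ (w.mc b).StepLeft s (w'.mc b)

/-- The transition rule between consecutive rows at neighbouring positions, the right one holding
the letter `s`. -/
def StepWindow (s : InputSym) (w z w' z' : RowCell M) : Prop :=
  (w.Restarts ∧ z'.marked = w.marked ∧ z'.IsInit s) ∨
    w'.marked = w.marked ∧
      ∀ b, ∃ t, w.Executes b t ∧ (w.mc b).StepWindow t (z.mc b) (w'.mc b) (z'.mc b)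

end RowCell

namespace Row

variable {M : Bool → Machine} {ℓ : ℕ → InputSym} {p : ℕ → Bool}

/-- The view of a row at position `i`. -/
def cell (ρ : Row M) (i : ℕ) : RowCell M := ⟨ρ.marked i, fun b => (ρ.conf b).cell i⟩

theorem exists_cell_eq_iff {w : ℕ → RowCell M} :
    (∃ ρ : Row M, ∀ i, w i = ρ.cell i) ↔ (w 0).CoherentLeft ∧ ∀ i, (w i).Coherent (w (i + 1)) := by
  constructor
  · rintro ⟨ρ, h⟩
    simp only [h]
    exact ⟨fun _ => rfl, fun _ _ => ⟨rfl, rfl⟩⟩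
  · rintro ⟨hleft, hcoh⟩
    refine ⟨⟨fun i => (w i).marked,
      fun b => ⟨((w 0).mc b).q, fun i => ((w i).mc b).l, fun i => ((w i).mc b).r⟩⟩, fun i => ?_⟩
    have hconst (b : Bool) : ((w i).mc b).q = ((w 0).mc b).q ∧
        ((w i).mc b).head = ((w 0).mc b).head := by
      induction i with
      | zero => exact ⟨rfl, rfl⟩
      | succ i ih => exact ⟨(hcoh i b).1.trans ih.1, (hcoh i b).2.trans ih.2⟩
    exact RowCell.ext rfl <| funext fun b =>
      MachineCell.ext (hconst b).1 ((hconst b).2.trans (hleft b).symm) rfl rfl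

theorem eq_initial_iff {ρ : Row M} (hℓ : ℓ 0 = .fst) (hp : p 0 = true) :
    ρ = initial M ℓ p ↔ ∀ i, (ρ.cell i).marked = p i ∧ (ρ.cell i).IsInit (ℓ i) := by
  constructor
  · rintro rfl i
    exact ⟨rfl, fun b => (Conf.eq_init_iff hℓ hp).1 rfl i⟩
  · intro h
    refine Row.ext (funext fun i => (h i).1)
      (funext fun b => (Conf.eq_init_iff hℓ hp).2 fun i => ?_)
    have := (h i).2 b
    rwa [(h i).1] at this

theorem restart_iff {ρ ρ' : Row M} (hℓ : ℓ 0 = .fst) :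
    ρ' = initial M ℓ (scons true ρ.marked) ↔
      ((ρ'.cell 0).marked = true ∧ (ρ'.cell 0).IsInit .fst) ∧ ∀ i,
        (ρ'.cell (i + 1)).marked = (ρ.cell i).marked ∧ (ρ'.cell (i + 1)).IsInit (ℓ (i + 1)) := by
  rw [eq_initial_iff hℓ rfl, ← hℓ]
  refine ⟨fun h => ⟨h 0, fun i => h (i + 1)⟩, fun h i => ?_⟩
  cases i with
  | zero => exact h.1
  | succ i => exact h.2 i

theorem continue_iff {ρ ρ' : Row M} :
    (ρ'.marked = ρ.marked ∧ ∀ b, (M b).step (ρ.conf b) = some (ρ'.conf b)) ↔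
      ((ρ'.cell 0).marked = (ρ.cell 0).marked ∧ ∀ b, ∃ s, (ρ.cell 0).Executes b s ∧
        ((ρ.cell 0).mc b).StepLeft s ((ρ'.cell 0).mc b)) ∧
      ∀ i, (ρ'.cell i).marked = (ρ.cell i).marked ∧ ∀ b, ∃ s, (ρ.cell i).Executes b s ∧
        ((ρ.cell i).mc b).StepWindow s ((ρ.cell (i + 1)).mc b) ((ρ'.cell i).mc b)
          ((ρ'.cell (i + 1)).mc b) := by
  simp only [Machine.step, Option.map_eq_some_iff, @eq_comm _ (Conf.app _ _), Conf.eq_app_iff]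
  constructor
  · rintro ⟨hm, h⟩
    exact ⟨⟨congrFun hm 0, fun b => (h b).imp fun s hs => ⟨hs.1, hs.2.1⟩⟩,
      fun i => ⟨congrFun hm i, fun b => (h b).imp fun s hs => ⟨hs.1, hs.2.2 i⟩⟩⟩
  · rintro ⟨⟨-, h0⟩, h⟩
    refine ⟨funext fun i => (h i).1, fun b => ?_⟩
    obtain ⟨s, hs, hleft⟩ := h0 b
    refine ⟨s, hs, hleft, fun i => ?_⟩
    obtain ⟨s', hs', hwindow⟩ := (h i).2 b
    rwa [← Option.some_injective _ (hs.symm.trans hs')] at hwindow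

theorem step_iff {ρ ρ' : Row M} (hℓ : ℓ 0 = .fst) :
    Step ℓ ρ ρ' ↔ (ρ.cell 0).StepLeft (ρ'.cell 0) ∧
      ∀ i, (ρ.cell i).StepWindow (ℓ (i + 1)) (ρ.cell (i + 1)) (ρ'.cell i) (ρ'.cell (i + 1)) := by
  have hstep : (M false).step (ρ.conf false) = none ↔ ∀ i, (ρ.cell i).Restarts := by
    simp [Machine.step, RowCell.Restarts, cell, Conf.cell]
  have hexec (i : ℕ) {s} (hs : (ρ.cell i).Executes false s) : ¬ (ρ.cell 0).Restarts :=
    fun h => Option.some_ne_none s (hs.symm.trans h)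
  rw [Step, restart_iff hℓ, continue_iff, hstep]
  constructor
  · rintro (⟨hr, h0, h⟩ | ⟨h0, h⟩)
    · exact ⟨.inl ⟨hr 0, h0⟩, fun i => .inl ⟨hr i, h i⟩⟩
    · exact ⟨.inr h0, fun i => .inr (h i)⟩
  · rintro ⟨⟨hr, h0⟩ | h0, h⟩
    · refine .inl ⟨fun _ => hr, h0, fun i => ((h i).resolve_right fun hi => ?_).2⟩
      obtain ⟨s, hs, -⟩ := hi.2 false
      exact hexec i hs hr
    · obtain ⟨s, hs, -⟩ := h0.2 false
      exact .inr ⟨h0, fun i => (h i).resolve_left fun hi => hexec 0 hs hi.1⟩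

end Row

/-! ### Tilings recognizing an effectively closed set -/

/-- A finite set of square tiles, each showing a letter of `D`, with constraints on the tilings
of the quadrant `ℕ × ℕ`: on single tiles of the bottom row, on pairs of consecutive tiles of the
leftmost column, and on `2 × 2` windows. -/
structure TileSet (D : Type u) where
  Cell : Type u
  [finite : Finite Cell]
  val : Cell → D
  bottom : Cell → Prop
  left : Cell → Cell → Prop
  window : Cell → Cell → Cell → Cell → Prop

attribute [instance] TileSet.finite

namespace TileSet

variable {D : Type u} (𝒯 : TileSet D)

/-- The array `c`, with `c i j` in column `i` and row `j`, satisfies the constraints. -/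
structure IsTiling (c : ℕ → ℕ → 𝒯.Cell) : Prop where
  bottom : ∀ i, 𝒯.bottom (c i 0)
  left : ∀ j, 𝒯.left (c 0 j) (c 0 (j + 1))
  window : ∀ i j, 𝒯.window (c i j) (c (i + 1) j) (c i (j + 1)) (c (i + 1) (j + 1))

/-- The sequences of `Z` are those which can be read along the antidiagonals of a tiling. -/
structure Recognizes (Z : Set (ℕ → D)) : Prop where
  sound : ∀ c, 𝒯.IsTiling c → ∃ z ∈ Z, ∀ i j, 𝒯.val (c i j) = z (i + j)
  complete : ∀ z ∈ Z, ∃ c, 𝒯.IsTiling c ∧ ∀ i j, 𝒯.val (c i j) = z (i + j)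

end TileSet

/-- What a column knows about the input: the block of bits over it, its position within the blocks
of length `m`, the input letter it holds, and the bit it passes on to the next column. The bits are
delayed by two columns because the input starts with two markers. -/
@[ext] structure Column (m : ℕ) where
  block : Fin m → Bool
  ctr : Fin m
  sym : InputSym
  queued : Bool

namespace Column

variable {m : ℕ}

instance : Finite (Column m) :=
  .of_injective (fun c => (c.block, c.ctr, c.sym, c.queued)) fun c c' h => by
    simp only [Prod.mk.injEq] at h
    exact Column.ext h.1 h.2.1 h.2.2.1 h.2.2.2

variable [NeZero m]

/-- The rule for the leftmost column. -/
def IsFirst (c : Column m) : Prop := c.ctr = 0 ∧ c.sym = .fst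

/-- The rule for neighbouring columns. -/
structure Next (c c' : Column m) : Prop where
  ctr : c'.ctr = c.ctr + 1
  block : c'.ctr ≠ 0 → c'.block = c.block
  queued : c'.queued = c.block c.ctr
  sym : c'.sym = if c.sym = .fst then .snd else .bit c.queued

theorem Next.block_eq {K : ℕ → Column m} (h0 : (K 0).IsFirst) (h : ∀ i, (K i).Next (K (i + 1)))
    (i : ℕ) : (K i).ctr = Fin.ofNat m i ∧ (K i).block = (K (i / m * m)).block := by
  induction i with
  | zero => exact ⟨h0.1, by simp⟩
  | succ i ih =>
    have hctr : (K (i + 1)).ctr = Fin.ofNat m (i + 1) := by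
      rw [(h i).ctr, ih.1]
      ext
      simp [Fin.val_add]
    refine ⟨hctr, ?_⟩
    by_cases hdvd : m ∣ i + 1
    · rw [Nat.div_mul_cancel hdvd]
    · have hne : (K (i + 1)).ctr ≠ 0 := fun h0 =>
        hdvd (Nat.dvd_of_mod_eq_zero (congrArg Fin.val (hctr.symm.trans h0)))
      rw [(h i).block hne, Nat.succ_div_of_not_dvd hdvd, ih.2]

theorem Next.exists_eq_flat {K : ℕ → Column m} (h0 : (K 0).IsFirst)
    (h : ∀ i, (K i).Next (K (i + 1))) :
    ∃ y : ℕ → Fin m → Bool, ∀ i, (K i).block = y (i / m) ∧ (K i).sym = inputTape (flat y) i := by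
  refine ⟨fun n => (K (n * m)).block, fun i => ⟨(block_eq h0 h i).2, ?_⟩⟩
  have hqueued (i : ℕ) : (K (i + 1)).queued = flat (fun n => (K (n * m)).block) i := by
    rw [(h i).queued, (block_eq h0 h i).1, (block_eq h0 h i).2, flat]
  match i with
  | 0 => exact h0.2
  | 1 => simp [(h 0).sym, h0.2, inputTape, scons]
  | i + 2 =>
    have hne : (K (i + 1)).sym ≠ .fst := by
      rw [(h i).sym]
      split_ifs <;> simp
    rw [(h (i + 1)).sym, if_neg hne, hqueued]
    rfl

/-- The columns over the blocks of `y`. -/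
def ofBlocks (y : ℕ → Fin m → Bool) (i : ℕ) : Column m :=
  ⟨y (i / m), Fin.ofNat m i, inputTape (flat y) i, scons false (flat y) i⟩

theorem next_ofBlocks (y : ℕ → Fin m → Bool) (i : ℕ) :
    (ofBlocks y i).Next (ofBlocks y (i + 1)) where
  ctr := by
    ext
    simp [ofBlocks, Fin.val_add]
  block hne := by
    have hdvd : ¬ m ∣ i + 1 := fun hdvd => hne (Fin.ext (Nat.mod_eq_zero_of_dvd hdvd))
    simp only [ofBlocks, Nat.succ_div_of_not_dvd hdvd]
  queued := rfl
  sym := by rcases i with _ | _ | i <;> simp [ofBlocks, inputTape, scons]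

end Column

/-- The start markers of the input. -/
def InputSym.isMarker : InputSym → Bool
  | .bit _ => false
  | _ => true

theorem isMarker_inputTape (f : ℕ → Bool) (i : ℕ) : (inputTape f i).isMarker = below 2 i := by
  rcases i with _ | _ | i <;> simp [inputTape, scons, InputSym.isMarker, below]

/-- The tiles of a space-time diagram: a letter together with what is visible of the column and of
the row. -/
@[ext] structure Tile (D : Type u) (m : ℕ) (M : Bool → Machine) where
  val : D
  col : Column m
  row : RowCell M

namespace Tile

variable {D : Type u} {m : ℕ} [NeZero m] {M : Bool → Machine} (π : D → Fin m → Bool)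

instance [Finite D] : Finite (Tile D m M) :=
  .of_injective (fun c => (c.val, c.col, c.row)) fun c c' h => by
    simp only [Prod.mk.injEq] at h
    exact Tile.ext h.1 h.2.1 h.2.2

/-- The bottom row shows the blocks `π` of its letters, and the machines start on the markers. -/
structure Bottom (c : Tile D m M) : Prop where
  block : c.col.block = π c.val
  marked : c.row.marked = c.col.sym.isMarker
  init : c.row.IsInit c.col.sym

/-- The rule for consecutive tiles of the leftmost column. -/
structure Left (c c' : Tile D m M) : Prop where
  first : c.col.IsFirst
  coherent : c.row.CoherentLeft
  step : c.row.StepLeft c'.row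

/-- The rule for the window with lower tiles `c`, `d` and upper tiles `c'`, `d'`. -/
structure Window (c d c' d' : Tile D m M) : Prop where
  val : d.val = c'.val
  col : c'.col = c.col
  next : c.col.Next d.col
  coherent : c.row.Coherent d.row
  step : c.row.StepWindow d.col.sym d.row c'.row d'.row

variable (M) in
/-- The space-time diagrams of the machines `M` over the sequences of blocks given by `π`. -/
def tileSet [Finite D] : TileSet D :=
  ⟨Tile D m M, val, Bottom π, Left, Window⟩

variable [Finite D] {π}

theorem exists_of_isTiling {c : ℕ → ℕ → Tile D m M} (hc : (tileSet M π).IsTiling c) :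
    ∃ (z : ℕ → D) (y : ℕ → Fin m → Bool) (ρ : ℕ → Row M),
      (∀ i j, (c i j).val = z (i + j)) ∧ (∀ n, π (z n) = y (n / m)) ∧
      ρ 0 = .initial M (inputTape (flat y)) (below 2) ∧
      ∀ j, Row.Step (inputTape (flat y)) (ρ j) (ρ (j + 1)) := by
  have hcol (i j : ℕ) : (c i j).col = (c i 0).col := by
    induction j with
    | zero => rfl
    | succ j ih => exact (hc.window i j).col.trans ih
  have hval (i j : ℕ) : (c i j).val = (c (i + j) 0).val := by
    induction j generalizing i with
    | zero => rfl
    | succ j ih => rw [← (hc.window i j).val, ih, Nat.succ_add_eq_add_succ]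
  obtain ⟨y, hy⟩ := Column.Next.exists_eq_flat (hc.left 0).first fun i => (hc.window i 0).next
  have hrow (j : ℕ) : ∃ ρ : Row M, ∀ i, (c i j).row = ρ.cell i :=
    Row.exists_cell_eq_iff.2 ⟨(hc.left j).coherent, fun i => (hc.window i j).coherent⟩
  choose ρ hρ using hrow
  refine ⟨fun i => (c i 0).val, y, ρ, hval, fun n => ?_, ?_, fun j => ?_⟩
  · rw [← (hc.bottom n).block, (hy n).1]
  · refine (Row.eq_initial_iff rfl rfl).2 fun i => ?_
    rw [← hρ, ← (hy i).2, ← isMarker_inputTape (flat y), ← (hy i).2]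
    exact ⟨(hc.bottom i).marked, (hc.bottom i).init⟩
  · refine (Row.step_iff rfl).2 ⟨by simpa only [hρ] using (hc.left j).step, fun i => ?_⟩
    rw [← (hy (i + 1)).2, ← hcol (i + 1) j, ← hρ, ← hρ, ← hρ, ← hρ]
    exact (hc.window i j).step

theorem isTiling_of_steps {z : ℕ → D} {y : ℕ → Fin m → Bool} {ρ : ℕ → Row M}
    (hzy : ∀ n, π (z n) = y (n / m)) (h0 : ρ 0 = .initial M (inputTape (flat y)) (below 2))
    (hρ : ∀ j, Row.Step (inputTape (flat y)) (ρ j) (ρ (j + 1))) :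
    (tileSet M π).IsTiling fun i j => ⟨z (i + j), Column.ofBlocks y i, (ρ j).cell i⟩ where
  bottom i := by
    have hinit := (Row.eq_initial_iff rfl rfl).1 h0 i
    exact ⟨(hzy i).symm, hinit.1.trans (isMarker_inputTape _ i).symm, hinit.2⟩
  left j := ⟨⟨rfl, rfl⟩, (Row.exists_cell_eq_iff.1 ⟨ρ j, fun _ => rfl⟩).1,
    ((Row.step_iff rfl).1 (hρ j)).1⟩
  window i j := ⟨congrArg z (Nat.succ_add_eq_add_succ i j), rfl, Column.next_ofBlocks y i,
    (Row.exists_cell_eq_iff.1 ⟨ρ j, fun _ => rfl⟩).2 i, ((Row.step_iff rfl).1 (hρ j)).2 i⟩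

end Tile

theorem EffectivelyClosedSet.exists_tileSet {m : ℕ} [NeZero m] {Y : Set (ℕ → Fin m → Bool)}
    (hY : EffectivelyClosedSet Y) {D : Type u} [Finite D] (π : D → Fin m → Bool) :
    ∃ 𝒯 : TileSet D, 𝒯.Recognizes {z | ∃ y ∈ Y, ∀ n, π (z n) = y (n / m)} := by
  obtain ⟨P, hP, hYP⟩ := hY.exists_test
  obtain ⟨Mt, ht⟩ := exists_machine hP.to_re
  obtain ⟨Mf, hf⟩ := exists_machine hP.not.to_re
  let M : Bool → Machine := fun b => cond b Mt Mf
  refine ⟨Tile.tileSet M π, fun c hc => ?_, ?_⟩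
  · obtain ⟨z, y, ρ, hval, hzy, h0, hρ⟩ := Tile.exists_of_isTiling hc
    refine ⟨z, ⟨y, (hYP y).2 ?_, hzy⟩, hval⟩
    exact Row.forall_not_of_steps (M := M) (ht (flat y)) (hf (flat y)) h0 hρ
  · rintro z ⟨y, hy, hzy⟩
    obtain ⟨ρ, h0, hρ⟩ := Row.exists_steps (M := M) (ℓ := inputTape (flat y))
      fun k hk => (hYP y).1 hy k ((ht (flat y) k).1 hk)
    exact ⟨_, Tile.isTiling_of_steps hzy h0 hρ, fun _ _ => rfl⟩

/-! ### Factors of subshifts of finite type over arbitrary finite alphabets -/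

theorem IsSFT.isFactorOfSFT {G A B : Type*} [Group G] [TopologicalSpace A] [DiscreteTopology A]
    [Finite A] [TopologicalSpace B] {Z : Set (G → A)} (hZ : IsSFT Z) {φ : (G → A) → ℕ → B}
    {act : G → (ℕ → B) → ℕ → B} {X : Set (ℕ → B)} (hφ : IsFactorMapOnto Z φ act X) :
    IsFactorOfSFT act X := by
  obtain ⟨k, ⟨e⟩⟩ := Finite.exists_equiv_fin A
  let decode : (G → Fin k) → G → A := fun x g => e.symm (x g)
  have hdecode : Continuous decode :=
    continuous_pi fun g => continuous_of_discreteTopology.comp (continuous_apply g)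
  obtain ⟨F, L, hL⟩ := hZ
  obtain ⟨hcont, hmaps, hsurj, hequiv⟩ := hφ
  refine ⟨k, decode ⁻¹' Z, φ ∘ decode, ⟨F, {p | (fun h => e.symm (p h)) ∈ L}, fun x => hL _⟩,
    hcont.comp hdecode.continuousOn fun x hx => hx, fun x hx => hmaps hx, fun y hy => ?_,
    fun g x hx => hequiv g (decode x) hx⟩
  obtain ⟨x, hx, rfl⟩ := hsurj hy
  have hx' : decode (fun g => e (x g)) = x := funext fun g => e.symm_apply_apply (x g)
  exact ⟨fun g => e (x g), (congrArg (· ∈ Z) hx').mpr hx, congrArg φ hx'⟩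

/-! ### Paradoxical walkers -/

section Walkers

variable {G : Type*} [Group G]

/-- A rule for walking in `G`: from `g` there are two moves, indexed by a Boolean `k`, each
multiplying `g` on the right by an element which depends on the sign of `g`. -/
structure Walker (G : Type*) where
  step : Bool → Bool → G
  sign : G → Bool

namespace Walker

variable (v w : Walker G)

/-- The move of kind `k` at `g`. -/
def move (k : Bool) (g : G) : G := g * v.step k (v.sign g)

/-- The sequence of positions attached to `g`: one move of kind `true` followed by moves of kind
`false`. -/
def pos (i : ℕ) (g : G) : G := (v.move false)^[i] (v.move true g)

/-- Right multiplication by `t` commutes with the moves. -/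
structure Fixes (t : G) : Prop where
  commute : ∀ k s, Commute (v.step k s) t
  sign : ∀ g, v.sign (g * t) = v.sign g

/-- Each of two walkers is fixed by the steps of the other. -/
def Indep : Prop := ∀ k s, v.Fixes (w.step k s) ∧ w.Fixes (v.step k s)

/-- The two moves are injective with disjoint images. -/
def IsParadoxical : Prop := Injective fun a : Bool × G => v.move a.1 a.2

/-- The inverse of the enumeration of the positions, defined where it makes sense. -/
noncomputable def decode : G → Option (ℕ × G) := partialInv fun a => v.pos a.1 a.2

variable {v w}

theorem pos_succ (i : ℕ) (g : G) : v.pos (i + 1) g = v.move false (v.pos i g) :=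
  iterate_succ_apply' ..

theorem Fixes.move_mul {t : G} (h : v.Fixes t) (k : Bool) (g : G) :
    v.move k (g * t) = v.move k g * t := by
  rw [move, move, h.sign, mul_assoc, mul_assoc, (h.commute k _).eq]

theorem Fixes.pos_mul {t : G} (h : v.Fixes t) (i : ℕ) (g : G) :
    v.pos i (g * t) = v.pos i g * t := by
  induction i with
  | zero => exact h.move_mul true g
  | succ i ih => rw [pos_succ, pos_succ, ih, h.move_mul]

theorem Indep.move_comm (h : v.Indep w) (k k' : Bool) (g : G) :
    v.move k (w.move k' g) = w.move k' (v.move k g) :=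
  calc v.move k (w.move k' g) = v.move k g * w.step k' (w.sign g) := (h k' _).1.move_mul k g
    _ = w.move k' (v.move k g) := congrArg (v.move k g * w.step k' ·) ((h k _).2.sign g).symm

theorem Indep.pos_move (h : v.Indep w) (i : ℕ) (k : Bool) (g : G) :
    v.pos i (w.move k g) = w.move k (v.pos i g) := by
  induction i with
  | zero => exact h.move_comm true k g
  | succ i ih => rw [pos_succ, pos_succ, ih, h.move_comm]

theorem Indep.pos_comm (h : v.Indep w) (i j : ℕ) (g : G) :
    v.pos i (w.pos j g) = w.pos j (v.pos i g) := by
  induction j with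
  | zero => exact h.pos_move i true g
  | succ j ih => rw [pos_succ, pos_succ, h.pos_move, ih]

theorem IsParadoxical.pos_injective (hv : v.IsParadoxical) :
    Injective fun a : ℕ × G => v.pos a.1 a.2 := by
  rintro ⟨i, g⟩ ⟨j, h⟩ hij
  have hinj {k k' g' h'} (he : v.move k g' = v.move k' h') : k = k' ∧ g' = h' :=
    Prod.mk.inj (hv he)
  induction i generalizing j with
  | zero =>
    cases j with
    | zero => exact congrArg (Prod.mk 0) (hinj hij).2
    | succ j => exact absurd (hinj (hij.trans (pos_succ j h))).1 (by decide)
  | succ i ih =>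
    cases j with
    | zero => exact absurd (hinj (hij.symm.trans (pos_succ i g))).1 (by decide)
    | succ j =>
      rw [Prod.mk.injEq, Nat.succ_inj, ← Prod.mk.injEq]
      exact ih j (hinj ((pos_succ i g).symm.trans (hij.trans (pos_succ j h)))).2

theorem IsParadoxical.decode_eq_some_iff (hv : v.IsParadoxical) {h : G} {a : ℕ × G} :
    v.decode h = some a ↔ v.pos a.1 a.2 = h :=
  hv.pos_injective.isPartialInv a h

theorem IsParadoxical.decode_pos (hv : v.IsParadoxical) (i : ℕ) (g : G) :
    v.decode (v.pos i g) = some (i, g) :=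
  hv.decode_eq_some_iff.2 rfl

theorem IsParadoxical.decode_mul (hv : v.IsParadoxical) {t : G} (ht : v.Fixes t) (h : G) :
    v.decode (h * t) = (v.decode h).map (Prod.map id (· * t)) := by
  ext ⟨i, g⟩
  rw [hv.decode_eq_some_iff, Option.map_eq_some_iff]
  constructor
  · intro hg
    refine ⟨(i, g * t⁻¹), hv.decode_eq_some_iff.2 (mul_right_cancel (b := t) ?_), by simp⟩
    rw [← ht.pos_mul, inv_mul_cancel_right, hg]
  · rintro ⟨⟨j, g'⟩, hg', he⟩
    obtain ⟨rfl, rfl⟩ := Prod.mk.inj he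
    rw [hv.decode_eq_some_iff] at hg'
    exact (ht.pos_mul _ _).trans (congrArg (· * t) hg')

/-- The walker with the same steps and another sign function. -/
def withSign (v : Walker G) (e : G → Bool) : Walker G := ⟨v.step, e⟩

theorem mul_move_withSign (v : Walker G) (e : G → Bool) (a : G) (k : Bool) (g : G) :
    a * (v.withSign fun h => e (a * h)).move k g = (v.withSign e).move k (a * g) :=
  (mul_assoc ..).symm

theorem mul_pos_withSign (v : Walker G) (e : G → Bool) (a : G) (i : ℕ) (g : G) :
    a * (v.withSign fun h => e (a * h)).pos i g = (v.withSign e).pos i (a * g) := by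
  induction i with
  | zero => exact mul_move_withSign ..
  | succ i ih => rw [pos_succ, pos_succ, mul_move_withSign, ih]

end Walker

end Walkers

/-! ### The simulating subshift -/

theorem isLocallyConstant_apply {G A : Type*} [TopologicalSpace A] [DiscreteTopology A]
    {f : (G → A) → G} (hf : IsLocallyConstant f) : IsLocallyConstant fun x : G → A => x (f x) := by
  refine (IsLocallyConstant.iff_eventually_eq _).2 fun x => ?_
  filter_upwards [hf.eventually_eq x, (continuous_apply (f x)).continuousAt.eventually
    (isOpen_discrete {x (f x)} |>.mem_nhds rfl)] with y hfy hy
  rw [hfy]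
  exact hy

section Simulation

variable {G : Type u} [Group G] {P : Type*}

/-- The alphabet of the simulating subshift. A configuration holds a sign for each walker, a letter
of a sequence in `B → Bool` along each walk, and a cell of a tiling along each pair of walks. -/
@[ext] structure Symbol (P : Type*) {B : Finset G} (𝒯 : TileSet (B → Bool)) where
  sign : P → Bool
  tape : P → B → Bool
  cell : P → P → Option 𝒯.Cell

variable {B : Finset G} {𝒯 : TileSet (B → Bool)}

namespace Symbol

instance [Finite P] : Finite (Symbol P 𝒯) :=
  .of_injective (fun a => (a.sign, a.tape, a.cell)) fun a b h => by
    simp only [Prod.mk.injEq] at h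
    exact Symbol.ext h.1 h.2.1 h.2.2

instance : TopologicalSpace (Symbol P 𝒯) := ⊥

instance : DiscreteTopology (Symbol P 𝒯) := ⟨rfl⟩

end Symbol

variable (W : P → Walker G)

/-- The walker whose steps are those of `W p` and whose signs are written in `x`. -/
def walker (x : G → Symbol P 𝒯) (p : P) : Walker G := (W p).withSign fun g => (x g).sign p

/-- The local rules at `g`. For independent `p` and `q`, the cells with index `p`, `q` found at the
positions `(walker W x p).pos i ((walker W x q).pos j g)` form a tiling, whose bottom row agrees
with the tape of `p` and whose left column agrees with the tape of `q`. The entry `b` of a letter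
at `g` is the entry `1` of the corresponding letter at `g * b`. -/
structure Rules (x : G → Symbol P 𝒯) (g : G) : Prop where
  sign_step : ∀ p q k s, (W p).Fixes ((W q).step k s) →
    (x (g * (W q).step k s)).sign p = (x g).sign p
  translate : ∀ p (b b' : B) t, t * b.1 = b' → (W p).Fixes t →
    (x (g * t)).sign p = (x g).sign p ∧ (x (g * t)).tape p b = (x g).tape p b'
  corner : ∀ p q, (W p).Indep (W q) →
    ∃ c, c ∈ (x ((walker W x p).move true ((walker W x q).move true g))).cell p q
  bottom : ∀ p q, (W p).Indep (W q) → ∀ c ∈ (x ((walker W x q).move true g)).cell p q,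
    𝒯.bottom c ∧ 𝒯.val c = (x g).tape p
  left : ∀ p q, (W p).Indep (W q) → ∀ c ∈ (x ((walker W x p).move true g)).cell p q,
    𝒯.val c = (x g).tape q ∧
      ∃ c' ∈ (x ((walker W x q).move false ((walker W x p).move true g))).cell p q, 𝒯.left c c'
  window : ∀ p q, (W p).Indep (W q) → ∀ c ∈ (x g).cell p q,
    ∃ c₁ ∈ (x ((walker W x p).move false g)).cell p q,
    ∃ c₂ ∈ (x ((walker W x q).move false g)).cell p q,
    ∃ c₃ ∈ (x ((walker W x p).move false ((walker W x q).move false g))).cell p q,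
      𝒯.window c c₁ c₂ c₃

section Local

/-- The steps of the walkers, and the identity. -/
def steps : Set G := insert 1 (Set.range fun a : P × Bool × Bool => (W a.1).step a.2.1 a.2.2)

theorem finite_steps [Finite P] : (steps W).Finite := (Set.finite_range _).insert 1

theorem step_mem_steps (p : P) (k s : Bool) : (W p).step k s ∈ steps W := .inr ⟨(p, k, s), rfl⟩

theorem Rules.congr {x y : G → Symbol P 𝒯} {g g' : G} {F : Set G} (h : Rules W x g)
    (hsteps : steps W * steps W ⊆ F) (hB : (B : Set G) * (B : Set G)⁻¹ ⊆ F)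
    (hF : ∀ f ∈ F, y (g' * f) = x (g * f)) : Rules W y g' := by
  have hone : 1 ∈ steps W := .inl rfl
  have hstep {f} (hf : f ∈ steps W) : y (g' * f) = x (g * f) :=
    hF f (hsteps ⟨f, hf, 1, hone, mul_one f⟩)
  have heq : y g' = x g := by simpa only [mul_one] using hstep hone
  have hmove (p k) : y ((walker W y p).move k g') = x ((walker W x p).move k g) := by
    simp only [Walker.move, walker, Walker.withSign, heq]
    exact hstep (step_mem_steps W p k _)
  have hmove₂ (p q k k') : y ((walker W y p).move k ((walker W y q).move k' g')) =
      x ((walker W x p).move k ((walker W x q).move k' g)) := by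
    have h₁ := congrArg (Symbol.sign · p) (hmove q k')
    simp only [Walker.move, walker, Walker.withSign, heq] at h₁ ⊢
    rw [h₁, mul_assoc, mul_assoc]
    exact hF _ (hsteps ⟨_, step_mem_steps W q k' _, _, step_mem_steps W p k _, rfl⟩)
  refine ⟨fun p q k s hf => ?_, fun p b b' t ht hf => ?_, ?_, ?_, ?_, ?_⟩
  · rw [hstep (step_mem_steps W q k s), heq, h.sign_step p q k s hf]
  · rw [hF t (hB ⟨b', b'.2, b⁻¹, Set.inv_mem_inv.2 b.2, mul_inv_eq_of_eq_mul ht.symm⟩), heq]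
    exact h.translate p b b' t ht hf
  · simpa only [hmove₂] using h.corner
  · simpa only [hmove, heq] using h.bottom
  · simpa only [hmove, hmove₂, heq] using h.left
  · simpa only [hmove, hmove₂, heq] using h.window

theorem isSFT_rules [Finite P] : IsSFT {x : G → Symbol P 𝒯 | ∀ g, Rules W x g} := by
  have hfin := ((finite_steps W).mul (finite_steps W)).union (B.finite_toSet.mul B.finite_toSet.inv)
  refine ⟨hfin.toFinset, {a | ∃ x g, Rules W x g ∧ ∀ h, a h = x (g * h)}, fun x =>
    ⟨fun hx g => ⟨x, g, hx g, fun h => rfl⟩, fun hx g => ?_⟩⟩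
  obtain ⟨y, g', hy, hxy⟩ := hx g
  exact hy.congr W Set.subset_union_left Set.subset_union_right fun f hf =>
    hxy ⟨f, hfin.mem_toFinset.2 hf⟩

theorem isLocallyConstant_pos (p : P) (i : ℕ) (g : G) :
    IsLocallyConstant fun x : G → Symbol P 𝒯 => (walker W x p).pos i g := by
  have hmove (k) {f : (G → Symbol P 𝒯) → G} (hf : IsLocallyConstant f) :
      IsLocallyConstant fun x => (walker W x p).move k (f x) :=
    hf.comp₂ (isLocallyConstant_apply hf) fun h a => h * (W p).step k (a.sign p)
  induction i with
  | zero => exact hmove true (.const g)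
  | succ i ih => simpa only [Walker.pos_succ] using hmove false ih

end Local

namespace Rules

variable {W} {x : G → Symbol P 𝒯} (hx : ∀ g, Rules W x g)

include hx

theorem indep {p q : P} (h : (W p).Indep (W q)) : (walker W x p).Indep (walker W x q) := fun k s =>
  ⟨⟨(h k s).1.commute, fun g => (hx g).sign_step p q k s (h k s).1⟩,
    ⟨(h k s).2.commute, fun g => (hx g).sign_step q p k s (h k s).2⟩⟩

theorem exists_cells {p q : P} (h : (W p).Indep (W q)) (g : G) : ∃ c : ℕ → ℕ → 𝒯.Cell,
    ∀ i j, c i j ∈ (x ((walker W x p).pos i ((walker W x q).pos j g))).cell p q := by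
  suffices hcell : ∀ i j, ∃ c, c ∈
      (x ((walker W x p).pos i ((walker W x q).pos j g))).cell p q by
    choose c hc using hcell
    exact ⟨c, hc⟩
  intro i
  induction i with
  | zero =>
    intro j
    induction j with
    | zero => exact (hx g).corner p q h
    | succ j ih =>
      obtain ⟨c, hc⟩ := ih
      obtain ⟨-, -, c₂, hc₂, -⟩ := (hx _).window p q h c hc
      exact ⟨c₂, by rwa [Walker.pos_succ, (indep hx h).pos_move]⟩
  | succ i ih =>
    intro j
    obtain ⟨c, hc⟩ := ih j
    obtain ⟨c₁, hc₁, -⟩ := (hx _).window p q h c hc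
    exact ⟨c₁, by rwa [Walker.pos_succ]⟩

theorem isTiling_and_val {p q : P} (h : (W p).Indep (W q)) (g : G) {c : ℕ → ℕ → 𝒯.Cell}
    (hc : ∀ i j, c i j ∈ (x ((walker W x p).pos i ((walker W x q).pos j g))).cell p q) :
    𝒯.IsTiling c ∧ (∀ i, 𝒯.val (c i 0) = (x ((walker W x p).pos i g)).tape p) ∧
      ∀ j, 𝒯.val (c 0 j) = (x ((walker W x q).pos j g)).tape q := by
  have hi := indep hx h
  have hright (i j) : c (i + 1) j ∈ (x ((walker W x p).move false
      ((walker W x p).pos i ((walker W x q).pos j g)))).cell p q := by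
    simpa only [Walker.pos_succ] using hc (i + 1) j
  have hup (i j) : c i (j + 1) ∈ (x ((walker W x q).move false
      ((walker W x p).pos i ((walker W x q).pos j g)))).cell p q := by
    simpa only [Walker.pos_succ, hi.pos_move] using hc i (j + 1)
  have hdiag (i j) : c (i + 1) (j + 1) ∈ (x ((walker W x p).move false ((walker W x q).move false
      ((walker W x p).pos i ((walker W x q).pos j g))))).cell p q := by
    simpa only [Walker.pos_succ, hi.pos_move] using hc (i + 1) (j + 1)
  have hbottom (i) := (hx ((walker W x p).pos i g)).bottom p q h (c i 0)
    (by rw [← hi.pos_move]; exact hc i 0)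
  have hleft (j) := (hx ((walker W x q).pos j g)).left p q h (c 0 j) (hc 0 j)
  refine ⟨⟨fun i => (hbottom i).1, fun j => ?_, fun i j => ?_⟩, fun i => (hbottom i).2,
    fun j => (hleft j).1⟩
  · obtain ⟨-, c', hc', hl⟩ := hleft j
    exact Option.mem_unique (hup 0 j) hc' ▸ hl
  · obtain ⟨c₁, hc₁, c₂, hc₂, c₃, hc₃, hw⟩ := (hx _).window p q h (c i j) (hc i j)
    rwa [Option.mem_unique (hright i j) hc₁, Option.mem_unique (hup i j) hc₂,
      Option.mem_unique (hdiag i j) hc₃]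

variable {Z : Set (ℕ → B → Bool)} (hZ : 𝒯.Recognizes Z)

include hZ

theorem exists_tape_eq {p q : P} (h : (W p).Indep (W q)) (g : G) :
    ∃ z ∈ Z, (∀ n, (x ((walker W x p).pos n g)).tape p = z n) ∧
      ∀ n, (x ((walker W x q).pos n g)).tape q = z n := by
  obtain ⟨c, hc⟩ := exists_cells hx h g
  obtain ⟨hc, hp, hq⟩ := isTiling_and_val hx h g hc
  obtain ⟨z, hz, hval⟩ := hZ.sound c hc
  exact ⟨z, hz, fun n => by rw [← hp, hval, add_zero], fun n => by rw [← hq, hval, zero_add]⟩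

theorem tape_eq {p q : P} (h : ReflTransGen (fun p q => (W p).Indep (W q)) p q) (g : G) (n : ℕ) :
    (x ((walker W x p).pos n g)).tape p = (x ((walker W x q).pos n g)).tape q := by
  induction h with
  | refl => rfl
  | tail _ h ih =>
    obtain ⟨z, -, hp, hq⟩ := exists_tape_eq hx hZ h g
    rw [ih, hp, hq]

theorem tape_apply_eq (hconn : ∀ p q, ReflTransGen (fun p q => (W p).Indep (W q)) p q)
    {b₀ b : B} (hb₀ : b₀ = (1 : G))
    (hb : ReflTransGen (fun b b' : B => ∃ t, (∃ p, (W p).Fixes t) ∧ t * b.1 = b') b₀ b)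
    (p : P) (g : G) (n : ℕ) : (x ((walker W x p).pos n g)).tape p b =
      (x ((walker W x p).pos n (g * b))).tape p b₀ := by
  induction hb generalizing g with
  | refl => rw [hb₀, mul_one]
  | @tail b b' _ hbb' ih =>
    obtain ⟨t, ⟨q, hf⟩, ht⟩ := hbb'
    have htr (h) := (hx h).translate q b b' t ht hf
    have hfix : (walker W x q).Fixes t := ⟨hf.commute, fun h => (htr h).1⟩
    calc (x ((walker W x p).pos n g)).tape p b' = (x ((walker W x q).pos n g)).tape q b' := by
          rw [tape_eq hx hZ (hconn p q)]
      _ = (x ((walker W x q).pos n (g * t))).tape q b := by rw [hfix.pos_mul, (htr _).2]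
      _ = (x ((walker W x p).pos n (g * t))).tape p b := by rw [tape_eq hx hZ (hconn p q)]
      _ = (x ((walker W x p).pos n (g * b'))).tape p b₀ := by rw [ih, mul_assoc, ht]

end Rules

/-- The configuration which displays, for all `g`, the sequence `z g` and the tiling `c g` at the
positions attached to `g`. -/
noncomputable def configuration (W : P → Walker G) (z : G → ℕ → B → Bool) (c : G → ℕ → ℕ → 𝒯.Cell)
    (g : G) : Symbol P 𝒯 where
  sign p := (W p).sign g
  tape p := ((W p).decode g).elim (fun _ => false) fun a => z a.2 a.1
  cell p q := ((W p).decode g).bind fun a => ((W q).decode a.2).map fun b => c b.2 a.1 b.1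

section Completeness

variable {W} (hW : ∀ p, (W p).IsParadoxical) (z : G → ℕ → B → Bool) (c : G → ℕ → ℕ → 𝒯.Cell)

include hW

theorem tape_configuration_pos (p : P) (n : ℕ) (g : G) :
    (configuration W z c ((W p).pos n g)).tape p = z g n := by
  simp only [configuration, (hW p).decode_pos, Option.elim_some]

theorem mem_cell_configuration_iff {p q : P} {h : G} {d : 𝒯.Cell} :
    d ∈ (configuration W z c h).cell p q ↔
      ∃ i j g, (W p).pos i ((W q).pos j g) = h ∧ c g i j = d := by
  simp only [configuration, Option.mem_def, Option.bind_eq_some_iff, Option.map_eq_some_iff,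
    (hW _).decode_eq_some_iff, Prod.exists]
  constructor
  · rintro ⟨i, _, hi, j, g, rfl, hd⟩
    exact ⟨i, j, g, hi, hd⟩
  · rintro ⟨i, j, g, hi, hd⟩
    exact ⟨i, _, hi, j, g, rfl, hd⟩

theorem rules_configuration (hc : ∀ g, 𝒯.IsTiling (c g))
    (hval : ∀ g i j, 𝒯.val (c g i j) = z g (i + j))
    (hz : ∀ g n (b b' : B) t, t * b.1 = b' → z (g * t) n b = z g n b') (g : G) :
    Rules W (configuration W z c) g := by
  have hmem {p q} (i j g) := (mem_cell_configuration_iff hW z c (p := p) (q := q)).2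
    ⟨i, j, g, rfl, rfl⟩
  have hwalker : walker W (configuration W z c) = W := rfl
  refine ⟨fun p q k s h => h.sign g, fun p b b' t ht h => ⟨h.sign g, ?_⟩, ?_, ?_, ?_, ?_⟩
  · simp only [configuration, (hW p).decode_mul h]
    cases (W p).decode g with
    | none => rfl
    | some a => exact hz a.2 a.1 b b' t ht
  all_goals rw [hwalker]; intro p q h
  · exact ⟨c g 0 0, hmem 0 0 g⟩
  all_goals intro d hd; obtain ⟨i, j, g', hg', rfl⟩ := (mem_cell_configuration_iff hW z c).1 hd
  · rw [h.pos_comm] at hg'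
    obtain ⟨rfl, rfl⟩ := Prod.mk.inj ((hW q).pos_injective (a₁ := (j, _)) (a₂ := (0, g)) hg')
    exact ⟨(hc g').bottom i, (hval g' i 0).trans (tape_configuration_pos hW z c p i g').symm⟩
  · obtain ⟨rfl, rfl⟩ := Prod.mk.inj ((hW p).pos_injective (a₁ := (i, _)) (a₂ := (0, g)) hg')
    refine ⟨?_, c g' 0 (j + 1), ?_, (hc g').left j⟩
    · rw [hval, zero_add]
      exact (tape_configuration_pos hW z c q j g').symm
    · have := hmem (p := p) (q := q) 0 (j + 1) g'
      rwa [Walker.pos_succ, h.pos_move] at this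
  · subst hg'
    refine ⟨_, ?_, _, ?_, _, ?_, (hc g').window i j⟩
    · simpa only [Walker.pos_succ] using hmem (p := p) (q := q) (i + 1) j g'
    · simpa only [Walker.pos_succ, h.pos_move] using hmem (p := p) (q := q) i (j + 1) g'
    · simpa only [Walker.pos_succ, h.pos_move] using hmem (p := p) (q := q) (i + 1) (j + 1) g'

end Completeness

end Simulation

/-! ### Self-simulability from walkers -/

section SelfSimulable

variable {G : Type u} [Group G]

theorem exists_finset_forall_reflTransGen {T : Set G} (hT : Submonoid.closure T = ⊤)
    (K : Finset G) : ∃ B : Finset G, K ⊆ B ∧ ∃ b₀ : B, b₀ = (1 : G) ∧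
      ∀ b : B, ReflTransGen (fun b b' : B => ∃ t ∈ T, t * b.1 = b') b₀ b := by
  classical
  choose l hlT hl using fun k =>
    Submonoid.exists_list_of_mem_closure (hT.symm ▸ Submonoid.mem_top k : k ∈ Submonoid.closure T)
  let B := (insert 1 K).biUnion fun k => ((l k).tails.map List.prod).toFinset
  have hB (b) : b ∈ B ↔ ∃ k ∈ insert 1 K, ∃ w, w <:+ l k ∧ w.prod = b := by
    simp only [B, Finset.mem_biUnion, List.mem_toFinset, List.mem_map, List.mem_tails]
  have hone : 1 ∈ B := (hB 1).2 ⟨1, Finset.mem_insert_self 1 K, [], List.nil_suffix, rfl⟩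
  refine ⟨B, fun k hk => (hB k).2 ⟨k, Finset.mem_insert_of_mem hk, l k, List.suffix_rfl, hl k⟩,
    ⟨1, hone⟩, rfl, fun ⟨b, hb⟩ => ?_⟩
  obtain ⟨k, hk, w, hw, rfl⟩ := (hB b).1 hb
  induction w with
  | nil => exact .refl
  | cons t w ih =>
    have hw' := (List.suffix_cons t w).trans hw
    exact (ih hw' ((hB _).2 ⟨k, hk, w, hw', rfl⟩)).tail
      ⟨t, hlT k t (hw.subset List.mem_cons_self), List.prod_cons.symm⟩

theorem forall_mem_and_equivariant {m : ℕ} {s : Fin m → G} {X : Set (ℕ → Bool)}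
    {act : G → (ℕ → Bool) → ℕ → Bool} (hact : IsActionOn act X) (hone : ∃ i, s i = 1)
    (hs : Submonoid.closure (Set.range s) = ⊤) {ξ : G → ℕ → Bool}
    (hξ : ∀ g, ∃ y ∈ SetRep s act X, ∀ n i, ξ (g * (s i)⁻¹) n = y n i) :
    (∀ g, ξ g ∈ X) ∧ ∀ k g, ξ (g * k⁻¹) = act k (ξ g) := by
  have hmem (g) : ξ g ∈ X ∧ ∀ i, ξ (g * (s i)⁻¹) = act (s i) (ξ g) := by
    obtain ⟨y, ⟨x, hx, hy⟩, hξy⟩ := hξ g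
    have hξx (i) : ξ (g * (s i)⁻¹) = act (s i) x := (funext fun n => hξy n i).trans (hy i)
    obtain ⟨i, hi⟩ := hone
    obtain rfl : ξ g = x := by simpa only [hi, inv_one, mul_one, hact.2.1 x hx] using hξx i
    exact ⟨hx, hξx⟩
  refine ⟨fun g => (hmem g).1, fun k => ?_⟩
  induction hs.symm ▸ Submonoid.mem_top k using Submonoid.closure_induction with
  | mem k hk =>
    obtain ⟨i, rfl⟩ := hk
    exact fun g => (hmem g).2 i
  | one => exact fun g => by rw [inv_one, mul_one, hact.2.1 _ (hmem g).1]
  | mul a b _ _ ha hb =>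
    exact fun g => by rw [mul_inv_rev, ← mul_assoc, ha, hb, hact.2.2 _ _ _ (hmem g).1]

variable {P : Type*}

section Reading

variable (W : P → Walker G) {B : Finset G} {𝒯 : TileSet (B → Bool)} (m : ℕ) (p : P) (b₀ : B)

/-- The bits with index `b₀` of every `m`-th letter of the tape of `p` attached to `g`. -/
def reading (x : G → Symbol P 𝒯) (g : G) (n : ℕ) : Bool :=
  (x ((walker W x p).pos (m * n) g)).tape p b₀

theorem reading_shift (k : G) (x : G → Symbol P 𝒯) (g : G) :
    reading W m p b₀ (shift k x) g = reading W m p b₀ x (k⁻¹ * g) :=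
  funext fun n => congrArg (fun h => (x h).tape p b₀)
    (Walker.mul_pos_withSign (W p) (fun h => (x h).sign p) k⁻¹ (m * n) g)

theorem continuous_reading (g : G) : Continuous fun x : G → Symbol P 𝒯 => reading W m p b₀ x g :=
  continuous_pi fun n => ((isLocallyConstant_apply (isLocallyConstant_pos W p (m * n) g)).comp
    fun a => a.tape p b₀).continuous

variable {W m b₀} [NeZero m] {s : Fin m → G} {b : Fin m → B} (hb : ∀ i, b i = (s i)⁻¹)
  {X : Set (ℕ → Bool)} {act : G → (ℕ → Bool) → ℕ → Bool} (hact : IsActionOn act X)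
  (h𝒯 : 𝒯.Recognizes {z | ∃ y ∈ SetRep s act X, ∀ n, (fun i => z n (b i)) = y (n / m)})
  (hb₀ : b₀ = (1 : G))

include hb hact h𝒯 hb₀

theorem Rules.forall_reading_mem_and_equivariant (hone : ∃ i, s i = 1)
    (hs : Submonoid.closure (Set.range s) = ⊤)
    (hconn : ∀ p q, ReflTransGen (fun p q => (W p).Indep (W q)) p q)
    (hpair : ∀ p, ∃ q, (W p).Indep (W q))
    (hB : ∀ b : B, ReflTransGen (fun b b' : B => ∃ t, (∃ p, (W p).Fixes t) ∧ t * b.1 = b') b₀ b)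
    {x : G → Symbol P 𝒯} (hx : ∀ g, Rules W x g) :
    (∀ g, reading W m p b₀ x g ∈ X) ∧
      ∀ k g, reading W m p b₀ x (g * k⁻¹) = act k (reading W m p b₀ x g) := by
  refine forall_mem_and_equivariant hact hone hs fun g => ?_
  obtain ⟨q, hpq⟩ := hpair p
  obtain ⟨z, ⟨y, hy, hyz⟩, hz, -⟩ := exists_tape_eq hx h𝒯 hpq g
  refine ⟨y, hy, fun n i => ?_⟩
  calc reading W m p b₀ x (g * (s i)⁻¹) n
      = (x ((walker W x p).pos (m * n) g)).tape p (b i) := by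
        rw [tape_apply_eq hx h𝒯 hconn hb₀ (hB (b i)), hb, reading]
    _ = y (m * n / m) i := by rw [hz, ← hyz]
    _ = y n i := by rw [Nat.mul_div_cancel_left n (NeZero.pos m)]

theorem exists_rules_and_reading_eq (hW : ∀ p, (W p).IsParadoxical) {x : ℕ → Bool} (hx : x ∈ X) :
    ∃ a : G → Symbol P 𝒯, (∀ g, Rules W a g) ∧ reading W m p b₀ a 1 = x := by
  let z : G → ℕ → B → Bool := fun g n b => act (g * b)⁻¹ x (n / m)
  have hz (g) : ∃ y ∈ SetRep s act X, ∀ n, (fun i => z g n (b i)) = y (n / m) := by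
    refine ⟨fun n i => act (s i) (act g⁻¹ x) n, ⟨act g⁻¹ x, hact.1 _ hx, fun i => rfl⟩,
      fun n => funext fun i => ?_⟩
    simp only [z, hb, mul_inv_rev, inv_inv, hact.2.2 _ _ _ hx]
  choose c hc hval using fun g => h𝒯.complete (z g) (hz g)
  refine ⟨configuration W z c, rules_configuration hW z c hc hval fun g n b b' t ht => ?_,
    funext fun n => ?_⟩
  · simp only [z, ← ht, mul_assoc]
  · refine (congrFun (tape_configuration_pos hW z c p (m * n) 1) b₀).trans ?_
    simp only [z, hb₀, mul_one, inv_one, hact.2.1 x hx, Nat.mul_div_cancel_left n (NeZero.pos m)]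

end Reading

theorem selfSimulable_of_walkers [Finite P] [Nonempty P] {W : P → Walker G}
    (hW : ∀ p, (W p).IsParadoxical)
    (hconn : ∀ p q, ReflTransGen (fun p q => (W p).Indep (W q)) p q)
    (hpair : ∀ p, ∃ q, (W p).Indep (W q))
    (hgen : Submonoid.closure {t | ∃ p, (W p).Fixes t} = ⊤) : SelfSimulable G := by
  classical
  rintro X act ⟨m, s, -, hact, hone, hs, hY⟩
  have : NeZero m := ⟨by rintro rfl; exact hone.choose.elim0⟩
  obtain ⟨p⟩ := ‹Nonempty P›
  obtain ⟨B, hsB, b₀, hb₀, hB⟩ := exists_finset_forall_reflTransGen hgen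
    (Finset.univ.image fun i => (s i)⁻¹)
  let b : Fin m → B := fun i => ⟨(s i)⁻¹, hsB (Finset.mem_image_of_mem _ (Finset.mem_univ i))⟩
  obtain ⟨𝒯, h𝒯⟩ := hY.exists_tileSet fun (d : B → Bool) i => d (b i)
  have hsound {x : G → Symbol P 𝒯} (hx : ∀ g, Rules W x g) :=
    Rules.forall_reading_mem_and_equivariant p (fun i => rfl) hact h𝒯 hb₀ hone hs hconn hpair hB hx
  refine (isSFT_rules W).isFactorOfSFT (φ := fun x => reading W m p b₀ x 1)
    ⟨(continuous_reading W m p b₀ 1).continuousOn, fun x hx => (hsound hx).1 1,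
      fun x hx => exists_rules_and_reading_eq p (fun i => rfl) hact h𝒯 hb₀ hW hx,
      fun k x hx => ?_⟩
  calc reading W m p b₀ (shift k x) 1 = reading W m p b₀ x (1 * k⁻¹) := by
        rw [reading_shift, mul_one, one_mul]
    _ = act k (reading W m p b₀ x 1) := (hsound hx).2 k 1

end SelfSimulable

/-! ### Generation of the special linear group by transvections -/

section Transvections

open Matrix

variable {ι R : Type*} [Fintype ι] [DecidableEq ι]

section CommRing

variable [CommRing R]

theorem vecMul_transvection (v : ι → R) (a b : ι) (c : R) :
    v ᵥ* transvection a b c = update v b (v b + v a * c) := by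
  ext j
  rw [transvection, vecMul_add, vecMul_one]
  obtain rfl | h := eq_or_ne j b
  · simp [vecMul, dotProduct, single_apply]
  · simp [vecMul, dotProduct, h, h.symm]

/-- The column operations which add multiples of a column in `s` to another column. -/
def columnOps (R : Type*) [CommRing R] (s : Set ι) : Submonoid (Matrix ι ι R) :=
  Submonoid.closure {T | ∃ a ∈ s, ∃ b, a ≠ b ∧ ∃ c, T = transvection a b c}

theorem transvection_mem_columnOps {s : Set ι} {a b : ι} (ha : a ∈ s) (hab : a ≠ b) (c : R) :
    transvection a b c ∈ columnOps R s :=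
  Submonoid.subset_closure ⟨a, ha, b, hab, c, rfl⟩

theorem columnOps_mono {s t : Set ι} (h : s ⊆ t) : columnOps R s ≤ columnOps R t :=
  Submonoid.closure_mono fun _ ⟨a, ha, hT⟩ => ⟨a, h ha, hT⟩

theorem det_eq_one_of_mem_columnOps {s : Set ι} {U : Matrix ι ι R} (hU : U ∈ columnOps R s) :
    U.det = 1 := by
  have hle : columnOps R s ≤ MonoidHom.mker (detMonoidHom : Matrix ι ι R →* R) := by
    refine Submonoid.closure_le.2 ?_
    rintro _ ⟨a, -, b, hab, c, rfl⟩
    exact det_transvection_of_ne a b hab c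
  exact hle hU

theorem vecMul_eq_self_of_mem_columnOps {s : Set ι} {U : Matrix ι ι R}
    (hU : U ∈ columnOps R s) {v : ι → R} (hv : ∀ a ∈ s, v a = 0) : v ᵥ* U = v := by
  induction hU using Submonoid.closure_induction with
  | one => exact vecMul_one v
  | mul U V _ _ hU hV => rw [← vecMul_vecMul, hU, hV]
  | mem T hT =>
    obtain ⟨a, ha, b, -, c, rfl⟩ := hT
    rw [vecMul_transvection, hv a ha, zero_mul, add_zero, update_eq_self]

theorem dvd_of_dvd_vecMul {s : Set ι} {U : Matrix ι ι R} (hU : U ∈ columnOps R s) {d : R}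
    {v : ι → R} (hd : ∀ a ∈ s, d ∣ (v ᵥ* U) a) : ∀ a ∈ s, d ∣ v a := by
  induction hU using Submonoid.closure_induction generalizing v with
  | one => simpa only [vecMul_one] using hd
  | mul U V _ _ hU hV => exact hU (hV (by simpa only [vecMul_vecMul] using hd))
  | mem T hT =>
    obtain ⟨a, ha, b, hab, c, rfl⟩ := hT
    simp only [vecMul_transvection] at hd
    have hda : d ∣ v a := by simpa only [update_of_ne hab] using hd a ha
    intro j hj
    obtain rfl | hjb := eq_or_ne j b
    · have hdj := hd j hj
      rw [update_self] at hdj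
      exact (dvd_add_left (hda.mul_right c)).1 hdj
    · simpa only [update_of_ne hjb] using hd j hj

theorem exists_vecMul_eq_single {s : Set ι} {k : ι} (hk : k ∈ s) {v : ι → R} (hv : v k = 1) :
    ∃ U ∈ columnOps R s, v ᵥ* U = Pi.single k 1 := by
  suffices H : ∀ t : Finset ι, k ∉ t →
      ∃ U ∈ columnOps R s, v ᵥ* U = fun j => if j ∈ t then 0 else v j by
    obtain ⟨U, hU, hvU⟩ := H (Finset.univ.erase k) (Finset.notMem_erase k _)
    refine ⟨U, hU, hvU.trans (funext fun j => ?_)⟩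
    obtain rfl | hj := eq_or_ne j k <;> simp [*]
  intro t
  induction t using Finset.induction_on with
  | empty => exact fun _ => ⟨1, one_mem _, by simp⟩
  | insert b t hb ih =>
    intro hkt
    obtain ⟨hkb, hkt⟩ := not_or.1 (Finset.mem_insert.not.1 hkt)
    obtain ⟨U, hU, hvU⟩ := ih hkt
    refine ⟨U * transvection k b (-v b), mul_mem hU (transvection_mem_columnOps hk hkb _), ?_⟩
    rw [← vecMul_vecMul, vecMul_transvection, hvU]
    ext j
    obtain rfl | hj := eq_or_ne j b <;> simp [*]

theorem isUnit_of_dvd_row {s : Set ι} {k : ι} (hk : k ∈ s) {M : Matrix ι ι R}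
    (hdet : M.det = 1) (hM : ∀ i ∉ s, M.row i = Pi.single i 1) {d : R}
    (hd : ∀ a ∈ s, d ∣ M.row k a) : IsUnit d := by
  have hcofactor : ∀ a ∉ s, M.adjugate a k = 0 := by
    intro a ha
    have hka : k ≠ a := fun h => ha (h ▸ hk)
    rw [adjugate_apply]
    refine det_zero_of_row_eq hka ?_
    rw [updateRow_self, updateRow_ne hka.symm]
    exact (hM a ha).symm
  have hexpand : ∑ a, M k a * M.adjugate a k = 1 := by
    rw [← mul_apply, mul_adjugate, hdet, one_smul, one_apply_eq]
  refine isUnit_of_dvd_one (hexpand ▸ Finset.dvd_sum fun a _ => ?_)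
  by_cases ha : a ∈ s
  · exact (hd a ha).mul_right _
  · rw [hcofactor a ha, mul_zero]
    exact dvd_zero d

end CommRing

section EuclideanDomain

variable [EuclideanDomain R]

theorem exists_dvd_vecMul {s : Set ι} {v : ι → R} (hv : ∃ a ∈ s, v a ≠ 0) :
    ∃ U ∈ columnOps R s, ∃ a ∈ s, ∀ b ∈ s, (v ᵥ* U) a ∣ (v ᵥ* U) b := by
  let entries : Set R := {x | x ≠ 0 ∧ ∃ U ∈ columnOps R s, ∃ a ∈ s, (v ᵥ* U) a = x}
  have hne : entries.Nonempty := by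
    obtain ⟨a, ha, hva⟩ := hv
    exact ⟨v a, hva, 1, one_mem _, a, ha, by rw [vecMul_one]⟩
  obtain ⟨x, ⟨hx, U, hU, a, ha, rfl⟩, hmin⟩ := EuclideanDomain.r_wellFounded.has_min entries hne
  refine ⟨U, hU, a, ha, fun b hb => ?_⟩
  obtain rfl | hab := eq_or_ne a b
  · rfl
  by_contra hdvd
  set w := v ᵥ* U with hw
  refine hmin (w b % w a) ⟨mt EuclideanDomain.mod_eq_zero.1 hdvd,
    U * transvection a b (-(w b / w a)), mul_mem hU (transvection_mem_columnOps ha hab _),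
    b, hb, ?_⟩ (EuclideanDomain.mod_lt _ hx)
  rw [← vecMul_vecMul, ← hw, vecMul_transvection, update_self]
  linear_combination -EuclideanDomain.div_add_mod (w b) (w a)

theorem exists_vecMul_apply_eq_one {s : Set ι} (hs : s.Nontrivial) {k : ι} (hk : k ∈ s)
    {v : ι → R} (hv : ∀ d, (∀ a ∈ s, d ∣ v a) → IsUnit d) :
    ∃ U ∈ columnOps R s, (v ᵥ* U) k = 1 := by
  have hcreate : ∀ U ∈ columnOps R s, ∀ a ∈ s, IsUnit ((v ᵥ* U) a) → ∀ b, a ≠ b →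
      ∃ V ∈ columnOps R s, (v ᵥ* V) b = 1 := by
    rintro U hU a ha ⟨u, hu⟩ b hab
    refine ⟨U * transvection a b (↑u⁻¹ * (1 - (v ᵥ* U) b)),
      mul_mem hU (transvection_mem_columnOps ha hab _), ?_⟩
    rw [← vecMul_vecMul, vecMul_transvection, update_self, ← hu, Units.mul_inv_cancel_left,
      add_sub_cancel]
  have hv0 : ∃ a ∈ s, v a ≠ 0 := by
    by_contra! h
    exact not_isUnit_zero (hv 0 fun a ha => zero_dvd_iff.2 (h a ha))
  obtain ⟨U, hU, a, ha, hdvd⟩ := exists_dvd_vecMul hv0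
  have hunit : IsUnit ((v ᵥ* U) a) := hv _ (dvd_of_dvd_vecMul hU hdvd)
  obtain rfl | hak := eq_or_ne a k
  · obtain ⟨b, hb, hba⟩ := hs.exists_ne a
    obtain ⟨V, hV, hVb⟩ := hcreate U hU a ha hunit b hba.symm
    exact hcreate V hV b hb (hVb ▸ isUnit_one) a hba
  · exact hcreate U hU a ha hunit k hak

theorem exists_row_mul_eq_single {s : Set ι} {k : ι} (hk : k ∈ s) {M : Matrix ι ι R}
    (hdet : M.det = 1) (hM : ∀ i ∉ s, M.row i = Pi.single i 1) :
    ∃ U ∈ columnOps R s, M.row k ᵥ* U = Pi.single k 1 := by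
  obtain hs | hs := s.subsingleton_or_nontrivial
  · refine exists_vecMul_eq_single hk ?_
    have hMk : M = updateRow 1 k (M.row k) := by
      ext i j
      obtain rfl | hi := eq_or_ne i k
      · rw [updateRow_self, row_apply]
      · have hMi : M.row i = Pi.single i 1 := hM i fun his => hi (hs his hk)
        rw [updateRow_ne hi, ← row_apply M, hMi, one_eq_pi_single]
    rw [← hdet, hMk, ← cramer_transpose_apply, transpose_one, cramer_one, ← hMk]
    rfl
  · obtain ⟨U, hU, hUk⟩ :=
      exists_vecMul_apply_eq_one (v := M.row k) hs hk fun _ => isUnit_of_dvd_row hk hdet hM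
    obtain ⟨V, hV, hVk⟩ := exists_vecMul_eq_single hk hUk
    exact ⟨U * V, mul_mem hU hV, by rw [← vecMul_vecMul, hVk]⟩

theorem exists_mul_row_eq_single {M : Matrix ι ι R} (hdet : M.det = 1) (t : Finset ι) :
    ∃ U ∈ columnOps R Set.univ, ∀ i ∈ t, (M * U).row i = Pi.single i 1 := by
  induction t using Finset.induction_on with
  | empty => exact ⟨1, one_mem _, by simp⟩
  | insert k t hk ih =>
    obtain ⟨U, hU, hMU⟩ := ih
    have hdetU : (M * U).det = 1 := by
      rw [det_mul, hdet, det_eq_one_of_mem_columnOps hU, one_mul]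
    obtain ⟨V, hV, hVk⟩ := exists_row_mul_eq_single (s := {i | i ∉ t}) hk hdetU
      fun i hi => hMU i (not_not.1 hi)
    refine ⟨U * V, mul_mem hU (columnOps_mono (Set.subset_univ _) hV), fun i hi => ?_⟩
    rw [← Matrix.mul_assoc, ← single_one_vecMul, ← vecMul_vecMul, single_one_vecMul]
    obtain rfl | hit := Finset.mem_insert.1 hi
    · exact hVk
    · rw [hMU i hit]
      refine vecMul_eq_self_of_mem_columnOps hV fun a ha => ?_
      exact Pi.single_eq_of_ne (fun h : a = i => ha (h ▸ hit)) 1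

theorem mem_columnOps_of_det_eq_one {M : Matrix ι ι R} (hdet : M.det = 1) :
    M ∈ columnOps R Set.univ := by
  have hinv : ∀ N : Matrix ι ι R, N.det = 1 → ∃ U ∈ columnOps R Set.univ, N * U = 1 := by
    intro N hN
    obtain ⟨U, hU, hNU⟩ := exists_mul_row_eq_single hN Finset.univ
    refine ⟨U, hU, ?_⟩
    ext i j
    rw [← row_apply (N * U), hNU i (Finset.mem_univ i), one_eq_pi_single]
  obtain ⟨U, hU, hMU⟩ := hinv M hdet
  obtain ⟨V, hV, hUV⟩ := hinv U (det_eq_one_of_mem_columnOps hU)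
  rwa [← Matrix.mul_one M, ← hUV, ← Matrix.mul_assoc, hMU, Matrix.one_mul]

end EuclideanDomain

end Transvections

/-! ### Pairs of indices -/

section DistinctPair

/-- An ordered pair of distinct indices. -/
abbrev DistinctPair (ι : Type*) : Type _ := {p : ι × ι // p.1 ≠ p.2}

namespace DistinctPair

variable {ι : Type*}

/-- The source of one of the two operations on the columns `p`: a multiple of this column is added
to the other one. -/
def source (p : DistinctPair ι) (k : Bool) : ι := cond k p.1.1 p.1.2

/-- The column which is modified by the operation with source `p.source k`. -/
def target (p : DistinctPair ι) (k : Bool) : ι := cond k p.1.2 p.1.1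

theorem source_ne_target (p : DistinctPair ι) (k : Bool) : p.source k ≠ p.target k := by
  cases k
  · exact p.2.symm
  · exact p.2

variable [DecidableEq ι]

/-- The two indices of a pair. -/
def support (p : DistinctPair ι) : Finset ι := {p.1.1, p.1.2}

theorem source_mem_support (p : DistinctPair ι) (k : Bool) : p.source k ∈ p.support := by
  cases k <;> simp [source, support]

theorem target_mem_support (p : DistinctPair ι) (k : Bool) : p.target k ∈ p.support := by
  cases k <;> simp [target, support]

theorem card_support (p : DistinctPair ι) : p.support.card = 2 :=
  Finset.card_pair p.2

variable [Fintype ι]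

theorem exists_disjoint_support {s : Finset ι} (hs : s.card + 2 ≤ Fintype.card ι) :
    ∃ p : DistinctPair ι, Disjoint s p.support := by
  have hcard : 1 < sᶜ.card := by rw [Finset.card_compl]; omega
  obtain ⟨a, ha, b, hb, hab⟩ := Finset.one_lt_card.1 hcard
  refine ⟨⟨(a, b), hab⟩, Finset.disjoint_right.2 fun x hx => ?_⟩
  obtain rfl | rfl := by simpa only [support, Finset.mem_insert, Finset.mem_singleton] using hx
  · exact Finset.mem_compl.1 ha
  · exact Finset.mem_compl.1 hb

theorem reflTransGen_disjoint_support (hι : 5 ≤ Fintype.card ι) (p q : DistinctPair ι) :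
    ReflTransGen (fun p q : DistinctPair ι => Disjoint p.support q.support) p q := by
  by_cases h : Disjoint p.support q.support
  · exact .single h
  have hinter : 0 < (p.support ∩ q.support).card :=
    Finset.card_pos.2 (Finset.not_disjoint_iff_nonempty_inter.1 h)
  have hcard := Finset.card_union_add_card_inter p.support q.support
  rw [card_support, card_support] at hcard
  obtain ⟨r, hr⟩ := exists_disjoint_support (s := p.support ∪ q.support) (by omega)
  obtain ⟨hpr, hqr⟩ := Finset.disjoint_union_left.1 hr
  exact .tail (.single hpr) hqr.symm

end DistinctPair

end DistinctPair

/-! ### Matrices acting trivially on a coordinate -/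

section FixesCoord

open Matrix

variable {ι R : Type*} [DecidableEq ι] [CommRing R]

/-- The row and the column of `M` at `k` are those of the identity matrix. -/
structure FixesCoord (M : Matrix ι ι R) (k : ι) : Prop where
  col : M.col k = Pi.single k 1
  row : M.row k = Pi.single k 1

theorem fixesCoord_transvection {i j k : ι} (hi : k ≠ i) (hj : k ≠ j) (c : R) :
    FixesCoord (transvection i j c) k where
  col := by
    ext a
    simp [transvection, one_apply, Pi.single_apply, hj.symm]
  row := by
    ext a
    simp [transvection, one_apply, Pi.single_apply, hi.symm, eq_comm]

/-- The diagonal matrix with an entry `-1` in position `i` and entries `1` elsewhere. -/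
def reflection (i : ι) : Matrix ι ι ℤ := diagonal (update 1 i (-1))

theorem reflection_mul_self [Fintype ι] (i : ι) : reflection i * reflection i = 1 := by
  rw [reflection, diagonal_mul_diagonal, ← diagonal_one]
  refine congrArg diagonal (funext fun k => ?_)
  obtain rfl | hk := eq_or_ne k i <;> simp [*]

theorem fixesCoord_reflection {i k : ι} (hk : k ≠ i) : FixesCoord (reflection i) k where
  col := by
    ext a
    obtain rfl | ha := eq_or_ne a k <;> simp [reflection, *]
  row := by
    ext a
    obtain rfl | ha := eq_or_ne a k <;> simp [reflection, *, Ne.symm]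

variable [Fintype ι]

theorem FixesCoord.commute_transvection {M : Matrix ι ι R} {i j : ι} (hi : FixesCoord M i)
    (hj : FixesCoord M j) (c : R) : Commute (transvection i j c) M := by
  have hsingle : Commute (single i j (1 : R)) M := by
    rw [Commute, SemiconjBy, single_eq_single_vecMulVec_single, vecMulVec_mul, mul_vecMulVec,
      single_one_vecMul, hj.row, mulVec_single_one, hi.col]
  rw [transvection, ← mul_one c, ← smul_eq_mul, ← smul_single]
  exact (Commute.one_left M).add_left (hsingle.smul_left c)

theorem FixesCoord.col_mul {M : Matrix ι ι R} {k : ι} (hk : FixesCoord M k)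
    (N : Matrix ι ι R) : (N * M).col k = N.col k := by
  rw [← mulVec_single_one, ← mulVec_mulVec, mulVec_single_one, hk.col, mulVec_single_one]

theorem col_mul_transvection_same (M : Matrix ι ι R) (i j : ι) (c : R) :
    (M * transvection i j c).col j = M.col j + c • M.col i :=
  funext fun a => mul_transvection_apply_same i j a c M

theorem col_mul_transvection_of_ne (M : Matrix ι ι R) {i j k : ι} (hk : k ≠ j) (c : R) :
    (M * transvection i j c).col k = M.col k :=
  funext fun a => mul_transvection_apply_of_ne i j a k hk c M

theorem det_reflection (i : ι) : (reflection i).det = -1 := by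
  rw [reflection, det_diagonal, Finset.prod_update_of_mem (Finset.mem_univ i)]
  simp

end FixesCoord

/-! ### Walking by column operations -/

section ColumnWalker

open Matrix

section Vectors

variable {ι : Type*} [Fintype ι] {x y : ι → ℤ} {c : ℤ}

theorem dotProduct_add_smul_nonneg_iff (hc : c = if 0 ≤ x ⬝ᵥ y then 1 else -1) :
    0 ≤ x ⬝ᵥ (y + c • x) ↔ 0 ≤ x ⬝ᵥ y := by
  have hx : 0 ≤ x ⬝ᵥ x := dotProduct_self_star_nonneg x
  rw [dotProduct_add, dotProduct_smul, smul_eq_mul]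
  split_ifs at hc <;> subst hc <;> omega

theorem dotProduct_self_lt (hy : y ≠ 0) (hc : c = if 0 ≤ x ⬝ᵥ y then 1 else -1) :
    x ⬝ᵥ x < (y + c • x) ⬝ᵥ (y + c • x) := by
  have hy : 0 < y ⬝ᵥ y := dotProduct_self_star_pos_iff.2 hy
  rw [dotProduct_add, dotProduct_smul, add_dotProduct, add_dotProduct, smul_dotProduct,
    smul_dotProduct, dotProduct_comm y x, smul_eq_mul, smul_eq_mul, smul_eq_mul]
  split_ifs at hc <;> subst hc <;> omega

end Vectors

variable {G ι : Type*} [Group G] [Fintype ι] [DecidableEq ι] {f : G →* Matrix ι ι ℤ}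

/-- The walker which, at `g`, adds `±` one of the columns `p.1.1` and `p.1.2` of `f g` to the
other; the sign is chosen so that the modified column becomes the longer of the two. The steps are
arbitrary preimages of transvections, hence junk values where there is no preimage. -/
noncomputable def columnWalker (f : G →* Matrix ι ι ℤ) (p : DistinctPair ι) : Walker G where
  step k s := invFun f (transvection (p.source k) (p.target k) (if s then 1 else -1))
  sign g := decide (0 ≤ (f g).col p.1.1 ⬝ᵥ (f g).col p.1.2)

theorem sign_columnWalker (p : DistinctPair ι) (k : Bool) (g : G) :
    (columnWalker f p).sign g =
      decide (0 ≤ (f g).col (p.source k) ⬝ᵥ (f g).col (p.target k)) := by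
  cases k
  · exact congrArg (fun z : ℤ => decide (0 ≤ z)) (dotProduct_comm ..)
  · rfl

theorem col_ne_zero (g : G) (i : ι) : (f g).col i ≠ 0 := by
  intro h
  have hinv : f g⁻¹ *ᵥ (f g).col i = Pi.single i 1 := by
    rw [← mulVec_single_one, mulVec_mulVec, ← map_mul, inv_mul_cancel, map_one, one_mulVec]
  rw [h, mulVec_zero] at hinv
  simpa using congrFun hinv i

variable (hf : ∀ M : Matrix ι ι ℤ, M.det = 1 → ∃ g, f g = M)
include hf

theorem map_step_columnWalker (p : DistinctPair ι) (k s : Bool) :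
    f ((columnWalker f p).step k s) =
      transvection (p.source k) (p.target k) (if s then 1 else -1) :=
  invFun_eq (hf _ (det_transvection_of_ne _ _ (p.source_ne_target k) _))

theorem map_move_columnWalker (p : DistinctPair ι) (k : Bool) (g : G) :
    f ((columnWalker f p).move k g) = f g * transvection (p.source k) (p.target k)
      (if 0 ≤ (f g).col (p.source k) ⬝ᵥ (f g).col (p.target k) then 1 else -1) := by
  simp only [Walker.move, map_mul, map_step_columnWalker hf, sign_columnWalker p k,
    decide_eq_true_eq]

theorem sign_move_columnWalker (p : DistinctPair ι) (k : Bool) (g : G) :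
    (columnWalker f p).sign ((columnWalker f p).move k g) = (columnWalker f p).sign g := by
  rw [sign_columnWalker p k, sign_columnWalker p k, map_move_columnWalker hf,
    col_mul_transvection_same, col_mul_transvection_of_ne _ (p.source_ne_target k)]
  exact decide_eq_decide.2 (dotProduct_add_smul_nonneg_iff rfl)

theorem dotProduct_self_lt_move (p : DistinctPair ι) (k : Bool) (g : G) :
    (f ((columnWalker f p).move k g)).col (p.source k) ⬝ᵥ
        (f ((columnWalker f p).move k g)).col (p.source k) <
      (f ((columnWalker f p).move k g)).col (p.target k) ⬝ᵥ
        (f ((columnWalker f p).move k g)).col (p.target k) := by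
  rw [map_move_columnWalker hf, col_mul_transvection_same,
    col_mul_transvection_of_ne _ (p.source_ne_target k)]
  exact dotProduct_self_lt (col_ne_zero g _) rfl

/-- After a move, the lengths of the two columns tell its kind and their inner product tells its
sign. -/
theorem columnWalker_isParadoxical (p : DistinctPair ι) : (columnWalker f p).IsParadoxical := by
  rintro ⟨k, g⟩ ⟨k', g'⟩ (h : (columnWalker f p).move k g = (columnWalker f p).move k' g')
  have hsign : (columnWalker f p).sign g = (columnWalker f p).sign g' := by
    rw [← sign_move_columnWalker hf p k, h, sign_move_columnWalker hf]
  obtain rfl : k = k' := by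
    have hlt := dotProduct_self_lt_move hf p k g
    have hlt' := dotProduct_self_lt_move hf p k' g'
    rw [h] at hlt
    cases k <;> cases k'
    · rfl
    · exact absurd hlt hlt'.asymm
    · exact absurd hlt hlt'.asymm
    · rfl
  rw [Walker.move, Walker.move, hsign] at h
  rw [mul_right_cancel h]

theorem columnWalker_fixes (hinj : Injective f) {p : DistinctPair ι} {t : G}
    (ht : ∀ i ∈ p.support, FixesCoord (f t) i) : (columnWalker f p).Fixes t where
  commute k s := by
    refine hinj ?_
    rw [map_mul, map_mul, map_step_columnWalker hf]
    exact (ht _ (p.source_mem_support k)).commute_transvection (ht _ (p.target_mem_support k)) _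
  sign g := by
    rw [sign_columnWalker p true, sign_columnWalker p true, map_mul,
      (ht _ (p.source_mem_support true)).col_mul, (ht _ (p.target_mem_support true)).col_mul]

theorem columnWalker_fixes_step (hinj : Injective f) {p q : DistinctPair ι}
    (hpq : Disjoint p.support q.support) (k s : Bool) :
    (columnWalker f p).Fixes ((columnWalker f q).step k s) := by
  refine columnWalker_fixes hf hinj fun i hi => ?_
  rw [map_step_columnWalker hf]
  have hne : ∀ j ∈ q.support, i ≠ j := fun j hj hij => Finset.disjoint_left.1 hpq hi (hij ▸ hj)
  exact fixesCoord_transvection (hne _ (q.source_mem_support k)) (hne _ (q.target_mem_support k)) _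

theorem columnWalker_indep (hinj : Injective f) {p q : DistinctPair ι}
    (hpq : Disjoint p.support q.support) : (columnWalker f p).Indep (columnWalker f q) :=
  fun k s => ⟨columnWalker_fixes_step hf hinj hpq k s,
    columnWalker_fixes_step hf hinj hpq.symm k s⟩

end ColumnWalker

/-! ### The generating set -/

section Generators

open Matrix

variable {ι : Type*} [DecidableEq ι]

/-- The elementary matrices with off-diagonal entry `±1`, and the reflections in the coordinate
hyperplanes. -/
def signedElementary (ι : Type*) [DecidableEq ι] : Set (Matrix ι ι ℤ) :=
  {M | ∃ p : DistinctPair ι, ∃ e : ℤˣ, M = transvection p.1.1 p.1.2 (e : ℤ)} ∪ Set.range reflection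

theorem finite_signedElementary [Finite ι] : (signedElementary ι).Finite := by
  refine Set.Finite.union ?_ (Set.finite_range _)
  refine (Set.finite_range fun a : DistinctPair ι × ℤˣ =>
    transvection a.1.1.1 a.1.1.2 (a.2 : ℤ)).subset ?_
  rintro _ ⟨p, e, rfl⟩
  exact ⟨(p, e), rfl⟩

variable [Fintype ι]

theorem mem_of_forall_transvection_unit_mem {S : Submonoid (Matrix ι ι ℤ)}
    (hS : ∀ p : DistinctPair ι, ∀ e : ℤˣ, transvection p.1.1 p.1.2 (e : ℤ) ∈ S)
    {M : Matrix ι ι ℤ} (hM : M.det = 1) : M ∈ S := by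
  refine Submonoid.closure_le.2 ?_ (mem_columnOps_of_det_eq_one hM)
  rintro _ ⟨i, -, j, hij, c, rfl⟩
  change transvection i j c ∈ S
  induction c using Int.induction_on with
  | zero =>
    rw [transvection_zero]
    exact one_mem S
  | succ n ih =>
    rw [← transvection_mul_transvection_same i j hij]
    exact mul_mem ih (hS ⟨(i, j), hij⟩ 1)
  | pred n ih =>
    rw [sub_eq_add_neg, ← transvection_mul_transvection_same i j hij]
    exact mul_mem ih (hS ⟨(i, j), hij⟩ (-1))

variable {G : Type*} [Group G] {f : G →* Matrix ι ι ℤ}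

theorem closure_preimage_signedElementary [Nonempty ι] (hinj : Injective f)
    (hf : ∀ M : Matrix ι ι ℤ, M.det = 1 → ∃ g, f g = M) :
    Submonoid.closure (f ⁻¹' signedElementary ι) = ⊤ := by
  set H := Submonoid.closure (f ⁻¹' signedElementary ι)
  have hdet_one : ∀ g, (f g).det = 1 → g ∈ H := by
    intro g hg
    suffices hmap : f g ∈ H.map f from (H.mem_map_iff_mem hinj).1 hmap
    refine mem_of_forall_transvection_unit_mem (fun p e => ?_) hg
    obtain ⟨t, ht⟩ := hf _ (det_transvection_of_ne p.1.1 p.1.2 p.2 (e : ℤ))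
    exact ⟨t, Submonoid.subset_closure (.inl ⟨p, e, ht⟩), ht⟩
  refine eq_top_iff.2 fun g _ => ?_
  obtain hg | hg := Int.isUnit_iff.1 ((isUnit_iff_isUnit_det _).1 ((Group.isUnit g).map f))
  · exact hdet_one g hg
  obtain ⟨i⟩ := ‹Nonempty ι›
  have hdet : (f g * reflection i).det = 1 := by
    rw [det_mul, hg, det_reflection, neg_mul_neg, one_mul]
  obtain ⟨h, hh⟩ := hf _ hdet
  have hr : f (g⁻¹ * h) = reflection i := by
    rw [map_mul, hh, ← mul_assoc, ← map_mul, inv_mul_cancel, map_one, one_mul]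
  have hg_eq : g = h * (g⁻¹ * h) := by
    refine hinj ?_
    rw [map_mul, hr, hh, mul_assoc, reflection_mul_self, mul_one]
  rw [hg_eq]
  exact mul_mem (hdet_one h (hh ▸ hdet)) (Submonoid.subset_closure (.inr ⟨i, hr.symm⟩))

theorem exists_columnWalker_fixes (hι : 4 ≤ Fintype.card ι) (hinj : Injective f)
    (hf : ∀ M : Matrix ι ι ℤ, M.det = 1 → ∃ g, f g = M) {t : G}
    (ht : f t ∈ signedElementary ι) : ∃ p, (columnWalker f p).Fixes t := by
  suffices H : ∃ s : Finset ι, s.card ≤ 2 ∧ ∀ i ∉ s, FixesCoord (f t) i by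
    obtain ⟨s, hs, hfix⟩ := H
    obtain ⟨p, hp⟩ := DistinctPair.exists_disjoint_support (s := s) (by omega)
    exact ⟨p, columnWalker_fixes hf hinj fun i hi => hfix i (Finset.disjoint_right.1 hp hi)⟩
  obtain ⟨p, e, he⟩ | ⟨i, hi⟩ := ht
  · refine ⟨p.support, p.card_support.le, fun i hip => ?_⟩
    obtain ⟨h1, h2⟩ := by
      simpa only [DistinctPair.support, Finset.mem_insert, Finset.mem_singleton, not_or] using hip
    rw [he]
    exact fixesCoord_transvection h1 h2 _
  · refine ⟨{i}, by simp, fun k hk => ?_⟩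
    rw [← hi]
    exact fixesCoord_reflection (Finset.notMem_singleton.1 hk)

end Generators

section Main

variable {G : Type u} {ι : Type*} [Group G] [Fintype ι] [DecidableEq ι]
  {f : G →* Matrix ι ι ℤ}

theorem fg_and_selfSimulable_of_injective (hι : 5 ≤ Fintype.card ι) (hinj : Injective f)
    (hf : ∀ M : Matrix ι ι ℤ, M.det = 1 → ∃ g, f g = M) : Group.FG G ∧ SelfSimulable G := by
  have : Nonempty ι := Fintype.card_pos_iff.1 (by omega)
  have hgen := closure_preimage_signedElementary hinj hf
  have hpair : ∀ p : DistinctPair ι, ∃ q : DistinctPair ι, Disjoint p.support q.support :=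
    fun p => DistinctPair.exists_disjoint_support (by rw [p.card_support]; omega)
  obtain ⟨p₀, -⟩ := DistinctPair.exists_disjoint_support (s := (∅ : Finset ι)) (by simp; omega)
  have : Nonempty (DistinctPair ι) := ⟨p₀⟩
  constructor
  · refine Group.fg_iff.2 ⟨_, ?_, finite_signedElementary.preimage hinj.injOn⟩
    exact top_le_iff.1 (hgen.ge.trans (Subgroup.le_closure_toSubmonoid _))
  · refine selfSimulable_of_walkers (columnWalker_isParadoxical hf)
      (fun p q => ?_) (fun p => (hpair p).imp fun q => columnWalker_indep hf hinj) ?_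
    · exact ReflTransGen.mono (fun p q => columnWalker_indep hf hinj) _ _
        (DistinctPair.reflTransGen_disjoint_support hι p q)
    · exact top_le_iff.1 (hgen.ge.trans (Submonoid.closure_mono fun t ht =>
        exists_columnWalker_fixes (by omega) hinj hf ht))

end Main

/-- For `n ≥ 5`, `GL n ℤ` and `SL n ℤ` are finitely generated and
self-simulable. -/
theorem gl_sl_selfSimulable (n : ℕ) (hn : 5 ≤ n) :
    (Group.FG (Matrix.GeneralLinearGroup (Fin n) ℤ) ∧
      SelfSimulable (Matrix.GeneralLinearGroup (Fin n) ℤ)) ∧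
    (Group.FG (Matrix.SpecialLinearGroup (Fin n) ℤ) ∧
      SelfSimulable (Matrix.SpecialLinearGroup (Fin n) ℤ)) := by
  have hcard : 5 ≤ Fintype.card (Fin n) := by rwa [Fintype.card_fin]
  constructor
  · exact fg_and_selfSimulable_of_injective (f := Units.coeHom _) hcard Units.val_injective
      fun M hM => ⟨Matrix.GeneralLinearGroup.mk'' M (hM ▸ isUnit_one), rfl⟩
  · exact fg_and_selfSimulable_of_injective hcard Matrix.SpecialLinearGroup.coeMonoidHom_injective
      fun M hM => ⟨⟨M, hM⟩, rfl⟩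

end SelfSim
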